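/- arXiv:1106.4583 — 14 statements merged into one kernel-verified Lean document; each statement's English description precedes it below -/
import Mathlib

section
/- Let Φ : ℝ² → ℝ be a smooth function, let (τ₀, ν₀) ∈ ℝ² and θ₀ ∈ ℝ. Then there exists a unique continuously differentiable function (τ, ν, θ) : ℝ → ℝ³, defined on all of ℝ, satisfying τ'(s) = 1 + ν(s)·Φ(τ(s), ν(s)), ν'(s) = −τ(s)·Φ(τ(s), ν(s)), θ'(s) = Φ(τ(s), ν(s)) for all s ∈ ℝ, with initial values τ(0) = τ₀, ν(0) = ν₀, θ(0) = θ₀. (In particular, no solution of this system blows up in finite time.) -/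
/-- the vector field -/
def HVF (Φ : ℝ × ℝ → ℝ) (x : ℝ × ℝ × ℝ) : ℝ × ℝ × ℝ :=
  (1 + x.2.1 * Φ (x.1, x.2.1), -x.1 * Φ (x.1, x.2.1), Φ (x.1, x.2.1))

theorem hd_fst {F : Type*} [NormedAddCommGroup F] [NormedSpace ℝ F] {f : ℝ → ℝ × F} {f' : ℝ × F}
    {s : ℝ} (h : HasDerivAt f f' s) : HasDerivAt (fun t => (f t).1) f'.1 s :=
  (ContinuousLinearMap.fst ℝ ℝ F).hasFDerivAt.comp_hasDerivAt s h

theorem hd_snd {F : Type*} [NormedAddCommGroup F] [NormedSpace ℝ F] {f : ℝ → ℝ × F} {f' : ℝ × F}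
    {s : ℝ} (h : HasDerivAt f f' s) : HasDerivAt (fun t => (f t).2) f'.2 s :=
  (ContinuousLinearMap.snd ℝ ℝ F).hasFDerivAt.comp_hasDerivAt s h

theorem hvf_trunc (Φ : ℝ × ℝ → ℝ) (hΦ : ContDiff ℝ (⊤ : ℕ∞) Φ) (M : ℝ) :
    ∃ (Ψ : ℝ × ℝ → ℝ) (K L : NNReal), (∀ p : ℝ × ℝ, |p.1| ≤ M → |p.2| ≤ M → Ψ p = Φ p) ∧
      LipschitzWith K (HVF Ψ) ∧ ∀ x, ‖HVF Ψ x‖ ≤ L := by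
  let χ : ContDiffBump (0 : ℝ × ℝ) := ⟨|M| + 1, |M| + 2, by positivity, by linarith⟩
  let Ψ : ℝ × ℝ → ℝ := fun p => χ p * Φ p
  have hχ : ContDiff ℝ 1 χ := χ.contDiff
  have hΦ1 : ContDiff ℝ 1 Φ := hΦ.of_le (by exact_mod_cast le_top)
  have hΨ : ContDiff ℝ 1 Ψ := hχ.mul hΦ1
  have hc : HasCompactSupport Ψ := χ.hasCompactSupport.mul_right
  have h1 : ContDiff ℝ 1 (fun p : ℝ × ℝ => p.2 * Ψ p) := contDiff_snd.mul hΨ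
  have h2 : ContDiff ℝ 1 (fun p : ℝ × ℝ => -p.1 * Ψ p) := contDiff_fst.neg.mul hΨ
  have c1 : HasCompactSupport (fun p : ℝ × ℝ => p.2 * Ψ p) := hc.mul_left
  have c2 : HasCompactSupport (fun p : ℝ × ℝ => -p.1 * Ψ p) := hc.mul_left
  obtain ⟨K0, l0⟩ := ContDiff.lipschitzWith_of_hasCompactSupport hc hΨ one_ne_zero
  obtain ⟨K1, l1⟩ := ContDiff.lipschitzWith_of_hasCompactSupport c1 h1 one_ne_zero
  obtain ⟨K2, l2⟩ := ContDiff.lipschitzWith_of_hasCompactSupport c2 h2 one_ne_zero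
  obtain ⟨B0, b0⟩ := hc.exists_bound_of_continuous hΨ.continuous
  obtain ⟨B1, b1⟩ := c1.exists_bound_of_continuous h1.continuous
  obtain ⟨B2, b2⟩ := c2.exists_bound_of_continuous h2.continuous
  have hp : LipschitzWith 1 (fun x : ℝ × ℝ × ℝ => (x.1, x.2.1)) := by
    have := (LipschitzWith.prod_fst (α := ℝ) (β := ℝ × ℝ)).prodMk
      ((LipschitzWith.prod_fst (α := ℝ) (β := ℝ)).comp
        (LipschitzWith.prod_snd (α := ℝ) (β := ℝ × ℝ)))
    simpa using this
  refine ⟨Ψ, _, Real.toNNReal (1 + |B0| + |B1| + |B2|), ?_,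
    (((LipschitzWith.const (1:ℝ)).add (l1.comp hp)).prodMk ((l2.comp hp).prodMk (l0.comp hp))), ?_⟩
  · intro p hp1 hp2
    have : χ p = 1 := by
      apply χ.one_of_mem_closedBall
      simp only [Metric.mem_closedBall, dist_zero_right, Prod.norm_def, χ, Real.norm_eq_abs]
      have := le_abs_self M
      exact max_le (by linarith) (by linarith)
    simp [Ψ, this]
  · intro x
    rw [Real.coe_toNNReal _ (by positivity)]
    have e0 := b0 (x.1, x.2.1)
    have e1 := b1 (x.1, x.2.1)
    have e2 := b2 (x.1, x.2.1)
    have a0 := le_abs_self B0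
    have a1 := le_abs_self B1
    have a2 := le_abs_self B2
    have n0 := abs_nonneg B0
    have n1 := abs_nonneg B1
    have n2 := abs_nonneg B2
    have e3 := norm_add_le (1:ℝ) (x.2.1 * Ψ (x.1, x.2.1))
    rw [norm_one] at e3
    refine max_le ?_ (max_le ?_ ?_)
    · change ‖(1:ℝ) + x.2.1 * Ψ (x.1, x.2.1)‖ ≤ _
      dsimp only at e1
      linarith
    · change ‖-x.1 * Ψ (x.1, x.2.1)‖ ≤ _
      dsimp only at e2
      linarith
    · change ‖Ψ (x.1, x.2.1)‖ ≤ _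
      linarith

theorem hvf_bound (Φ : ℝ × ℝ → ℝ) (T : ℝ) (f : ℝ → ℝ × ℝ × ℝ)
    (hf : ∀ s ∈ Set.Ioo (-T) T, HasDerivAt f (HVF Φ (f s)) s) (t : ℝ) (ht : t ∈ Set.Ioo (-T) T) :
    |(f t).1| ≤ √(1 + (f 0).1 ^ 2 + (f 0).2.1 ^ 2) + T ∧
    |(f t).2.1| ≤ √(1 + (f 0).1 ^ 2 + (f 0).2.1 ^ 2) + T := by
  have hT : 0 < T := by have := ht.1.trans ht.2; linarith
  have key := Convex.norm_image_sub_le_of_norm_hasDerivWithin_le (C := 1) (s := Set.Ioo (-T) T)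
    (f := fun t => √(1 + (f t).1 ^ 2 + (f t).2.1 ^ 2))
    (f' := fun t => (f t).1 / √(1 + (f t).1 ^ 2 + (f t).2.1 ^ 2)) (x := 0) (y := t) ?_ ?_
    (convex_Ioo _ _) ⟨by linarith, hT⟩ ht
  · rw [Real.norm_eq_abs, Real.norm_eq_abs, sub_zero, one_mul] at key
    have h1 := (abs_le.1 key).2
    have h2 : |t| ≤ T := abs_le.2 ⟨ht.1.le, ht.2.le⟩
    have h3 : |(f t).1| ≤ √(1 + (f t).1 ^ 2 + (f t).2.1 ^ 2) :=
      Real.abs_le_sqrt (by nlinarith [sq_nonneg (f t).2.1])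
    have h4 : |(f t).2.1| ≤ √(1 + (f t).1 ^ 2 + (f t).2.1 ^ 2) :=
      Real.abs_le_sqrt (by nlinarith [sq_nonneg (f t).1])
    constructor <;> linarith
  · intro s hs
    have d := hf s hs
    have d1 : HasDerivAt (fun t => (f t).1) (1 + (f s).2.1 * Φ ((f s).1, (f s).2.1)) s :=
      hd_fst d
    have d2 : HasDerivAt (fun t => (f t).2.1) (-(f s).1 * Φ ((f s).1, (f s).2.1)) s :=
      hd_fst (hd_snd d)
    have hpos : 0 < 1 + (f s).1 ^ 2 + (f s).2.1 ^ 2 := by positivity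
    have d3 := ((((d1.pow 2).const_add 1).add (d2.pow 2)).sqrt hpos.ne').hasDerivWithinAt
      (s := Set.Ioo (-T) T)
    refine d3.congr_deriv ?_
    have : √(1 + (f s).1 ^ 2 + (f s).2.1 ^ 2) ≠ 0 := (Real.sqrt_pos.2 hpos).ne'
    simp only [Pi.add_apply, Pi.pow_apply]
    field_simp
    push_cast
    ring
  · intro s hs
    have hpos : 0 < 1 + (f s).1 ^ 2 + (f s).2.1 ^ 2 := by positivity
    rw [norm_div, Real.norm_eq_abs, Real.norm_eq_abs, abs_of_pos (Real.sqrt_pos.2 hpos),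
      div_le_one (Real.sqrt_pos.2 hpos)]
    exact Real.abs_le_sqrt (by nlinarith [sq_nonneg (f s).2.1])

theorem hvf_unique (Φ : ℝ × ℝ → ℝ) (hΦ : ContDiff ℝ (⊤ : ℕ∞) Φ) (T : ℝ) (f g : ℝ → ℝ × ℝ × ℝ)
    (hf : ∀ s ∈ Set.Ioo (-T) T, HasDerivAt f (HVF Φ (f s)) s)
    (hg : ∀ s ∈ Set.Ioo (-T) T, HasDerivAt g (HVF Φ (g s)) s) (h0 : f 0 = g 0) :
    Set.EqOn f g (Set.Ioo (-T) T) := by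
  rcases le_or_gt T 0 with hT | hT
  · intro t ht
    have := ht.1.trans ht.2
    linarith
  set M := √(1 + (f 0).1 ^ 2 + (f 0).2.1 ^ 2) + T with hM
  obtain ⟨Ψ, K, L, e, lip, -⟩ := hvf_trunc Φ hΦ M
  have key : ∀ x : ℝ × ℝ × ℝ, |x.1| ≤ M ∧ |x.2.1| ≤ M → HVF Φ x = HVF Ψ x := by
    intro x hx
    simp only [HVF, e (x.1, x.2.1) hx.1 hx.2]
  refine ODE_solution_unique_of_mem_Ioo (v := fun _ => HVF Ψ) (s := fun _ => Set.univ) (K := K)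
    (t₀ := 0) (fun _ _ => lip.lipschitzOnWith) ⟨by linarith, hT⟩ ?_ ?_ h0
  · intro t ht
    refine ⟨?_, trivial⟩
    rw [← key _ (hvf_bound Φ T f hf t ht)]
    exact hf t ht
  · intro t ht
    refine ⟨?_, trivial⟩
    rw [← key _ (by rw [hM, h0]; exact hvf_bound Φ T g hg t ht)]
    exact hg t ht

theorem hvf_exists (Φ : ℝ × ℝ → ℝ) (hΦ : ContDiff ℝ (⊤ : ℕ∞) Φ) (T : ℝ) (hT : 0 < T)
    (x₀ : ℝ × ℝ × ℝ) : ∃ f : ℝ → ℝ × ℝ × ℝ, f 0 = x₀ ∧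
      ∀ s ∈ Set.Ioo (-T) T, HasDerivAt f (HVF Φ (f s)) s := by
  obtain ⟨Ψ, K, L, e, lip, bd⟩ := hvf_trunc Φ hΦ (√(1 + x₀.1 ^ 2 + x₀.2.1 ^ 2) + T)
  have pl : IsPicardLindelof (fun _ => HVF Ψ)
      (⟨0, by linarith, hT.le⟩ : Set.Icc (-T) T) x₀ (L * T.toNNReal) 0 L K :=
    IsPicardLindelof.of_time_independent (fun x _ => bd x) lip.lipschitzOnWith (by
      simp [hT.le])
  obtain ⟨f, hf0, hf⟩ := pl.exists_eq_forall_mem_Icc_hasDerivWithinAt₀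
  have hf0 : f 0 = x₀ := hf0
  have hf' : ∀ s ∈ Set.Ioo (-T) T, HasDerivAt f (HVF Ψ (f s)) s := fun s hs =>
    (hf s (Set.Ioo_subset_Icc_self hs)).hasDerivAt (Icc_mem_nhds hs.1 hs.2)
  refine ⟨f, hf0, fun s hs => ?_⟩
  have b := hvf_bound Ψ T f hf' s hs
  rw [hf0] at b
  have : HVF Φ (f s) = HVF Ψ (f s) := by
    simp only [HVF, e ((f s).1, (f s).2.1) b.1 b.2]
  rw [this]
  exact hf' s hs

theorem hvf_global (Φ : ℝ × ℝ → ℝ) (hΦ : ContDiff ℝ (⊤ : ℕ∞) Φ)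
    (x₀ : ℝ × ℝ × ℝ) : ∃ f : ℝ → ℝ × ℝ × ℝ, f 0 = x₀ ∧
      ∀ s, HasDerivAt f (HVF Φ (f s)) s := by
  choose F hF0 hF using fun n : ℕ => hvf_exists Φ hΦ (n + 1) (by positivity) x₀
  have agree : ∀ m n : ℕ, ∀ t : ℝ, |t| < m + 1 → |t| < n + 1 → F m t = F n t := by
    intro m n t hm hn
    refine hvf_unique Φ hΦ (min (m + 1) (n + 1)) (F m) (F n) ?_ ?_ (by rw [hF0, hF0])
      (abs_lt.1 (lt_min hm hn))
    · intro s hs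
      exact hF m s (abs_lt.1 ((abs_lt.2 hs).trans_le (min_le_left _ _)))
    · intro s hs
      exact hF n s (abs_lt.1 ((abs_lt.2 hs).trans_le (min_le_right _ _)))
  have hc : ∀ t : ℝ, |t| < (⌈|t|⌉₊ : ℝ) + 1 := fun t => by
    have := Nat.le_ceil |t|
    linarith
  refine ⟨fun t => F ⌈|t|⌉₊ t, by simp [hF0], fun s => ?_⟩
  refine (hF ⌈|s|⌉₊ s (abs_lt.1 (hc s))).congr_of_eventuallyEq ?_
  filter_upwards [Ioo_mem_nhds (abs_lt.1 (hc s)).1 (abs_lt.1 (hc s)).2] with t ht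
  exact agree _ _ t (hc t) (abs_lt.2 ht)


/-- Lemma 3.2, ODE form.
For every smooth function `Φ : ℝ² → ℝ` and initial values `(τ₀, ν₀, θ₀)`, there is a
unique continuously differentiable solution `(τ, ν, θ) : ℝ → ℝ³`, defined on all of `ℝ`,
of the system `τ' = 1 + ν·Φ(τ,ν)`, `ν' = −τ·Φ(τ,ν)`, `θ' = Φ(τ,ν)` with
`τ(0) = τ₀`, `ν(0) = ν₀`, `θ(0) = θ₀`. -/
theorem helicoidal_prescribed_curvature_ode_existence_uniqueness
    (Φ : ℝ × ℝ → ℝ) (hΦ : ContDiff ℝ (⊤ : ℕ∞) Φ) (τ₀ ν₀ θ₀ : ℝ) :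
    ∃! f : ℝ → ℝ × ℝ × ℝ,
      (∀ s : ℝ, HasDerivAt (fun t => (f t).1)
          (1 + (f s).2.1 * Φ ((f s).1, (f s).2.1)) s) ∧
      (∀ s : ℝ, HasDerivAt (fun t => (f t).2.1)
          (-(f s).1 * Φ ((f s).1, (f s).2.1)) s) ∧
      (∀ s : ℝ, HasDerivAt (fun t => (f t).2.2)
          (Φ ((f s).1, (f s).2.1)) s) ∧
      f 0 = (τ₀, ν₀, θ₀) := by
  obtain ⟨f, hf0, hf⟩ := hvf_global Φ hΦ (τ₀, ν₀, θ₀)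
  refine ⟨f, ⟨?_, ?_, ?_, hf0⟩, ?_⟩
  · exact fun s => hd_fst (hf s)
  · exact fun s => hd_fst (hd_snd (hf s))
  · exact fun s => hd_snd (hd_snd (hf s))
  · rintro g ⟨g1, g2, g3, g0⟩
    have hg : ∀ s, HasDerivAt g (HVF Φ (g s)) s := fun s =>
      (g1 s).prodMk ((g2 s).prodMk (g3 s))
    funext t
    refine hvf_unique Φ hΦ (|t| + 1) g f (fun s _ => hg s) (fun s _ => hf s) (by rw [g0, hf0])
      (abs_lt.1 (by linarith))
end

section
/- For every s ∈ ℝ with τ(s) ≠ 0, the derivative of the quotient ν/τ at s equals −(τ(s)⁵ + τ(s)³ν(s)² + h²τ(s)³ + h²τ(s)ν(s)² + h²ν(s))/(τ(s)²(τ(s)² + ν(s)² + h²)). Consequently, at every s where τ(s) > 0 and ν(s) > 0, the function ν/τ has strictly negative derivative. -/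
open Filter Topology

/- Context: `h > 0`; `τ, ν : ℝ → ℝ` solve the ODE system of the generating curve of a
helicoidal surface of pitch `h` rotating with unit angular speed under mean curvature flow:
`τ' = ((τ² + h²)/(τ² + ν² + h²))(1 + τν)`, `ν' = (τν − τ²(τ² + h²))/(τ² + ν² + h²)`,
with `r = √(τ² + ν²)` and signed curvature `k = (τ(τ² + h²) − ν)/(r² + h²)`. -/

/-- Lemma 4.2. Wherever `τ ≠ 0`, the quotient `ν/τ` has derivative
`−(τ⁵ + τ³ν² + h²τ³ + h²τν² + h²ν)/(τ²(τ² + ν² + h²))`; in particular `ν/τ` has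
strictly negative derivative wherever `τ > 0` and `ν > 0`. -/
theorem ratio_nu_tau_decreasing
    (h : ℝ) (hh : 0 < h) (τ ν : ℝ → ℝ)
    (hτ : ∀ s : ℝ, HasDerivAt τ
      ((τ s ^ 2 + h ^ 2) / (τ s ^ 2 + ν s ^ 2 + h ^ 2) * (1 + τ s * ν s)) s)
    (hν : ∀ s : ℝ, HasDerivAt ν
      ((τ s * ν s - τ s ^ 2 * (τ s ^ 2 + h ^ 2)) / (τ s ^ 2 + ν s ^ 2 + h ^ 2)) s) :
    (∀ s : ℝ, τ s ≠ 0 →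
      HasDerivAt (fun t => ν t / τ t)
        (-(τ s ^ 5 + τ s ^ 3 * ν s ^ 2 + h ^ 2 * τ s ^ 3
            + h ^ 2 * τ s * ν s ^ 2 + h ^ 2 * ν s)
          / (τ s ^ 2 * (τ s ^ 2 + ν s ^ 2 + h ^ 2))) s) ∧
    (∀ s : ℝ, 0 < τ s → 0 < ν s → deriv (fun t => ν t / τ t) s < 0) := by
  have key : ∀ s : ℝ, τ s ≠ 0 →
      HasDerivAt (fun t => ν t / τ t)
        (-(τ s ^ 5 + τ s ^ 3 * ν s ^ 2 + h ^ 2 * τ s ^ 3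
            + h ^ 2 * τ s * ν s ^ 2 + h ^ 2 * ν s)
          / (τ s ^ 2 * (τ s ^ 2 + ν s ^ 2 + h ^ 2))) s := by
    intro s hs
    have hD : τ s ^ 2 + ν s ^ 2 + h ^ 2 ≠ 0 := by positivity
    refine ((hν s).fun_div (hτ s) hs).congr_deriv ?_
    field_simp
    ring
  refine ⟨key, fun s h1 h2 => ?_⟩
  rw [(key s h1.ne').deriv]
  exact div_neg_of_neg_of_pos (neg_neg_of_pos (by positivity)) (by positivity)
end

section
/- Both τ and ν have (possibly infinite) limits in each direction: there exist L₁, L₂, L₃, L₄ in the extended reals [−∞, +∞] such that τ(s) → L₁ and ν(s) → L₂ as s → +∞, and τ(s) → L₃ and ν(s) → L₄ as s → −∞. -/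
open Filter Topology

theorem aux_cross (f f' : ℝ → ℝ) (a : ℝ) (hf : ∀ s, HasDerivAt f (f' s) s)
    (hz : ∀ s, a ≤ s → f s = 0 → 0 < f' s) :
    (∃ b, a ≤ b ∧ ∀ s, b ≤ s → 0 ≤ f s) ∨ (∃ b, a ≤ b ∧ ∀ s, b ≤ s → f s ≤ 0) := by
  by_cases hx : ∃ b, a ≤ b ∧ 0 ≤ f b
  · obtain ⟨b, hab, hb⟩ := hx
    refine Or.inl ⟨b, hab, fun s hs => ?_⟩
    have key := image_le_of_deriv_right_lt_deriv_boundary (f := fun x => - f x)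
      (f' := fun x => - f' x) (a := b) (b := s) (B := fun _ => (0:ℝ)) (B' := fun _ => (0:ℝ))
      (fun x _ => (hf x).neg.continuousAt.continuousWithinAt)
      (fun x _ => (hf x).neg.hasDerivWithinAt) (by simpa using hb)
      (fun x => hasDerivAt_const x (0:ℝ))
      (fun x hx h0 => by
        have := hz x (hab.trans hx.1) (by simpa using h0)
        simpa using this)
      (Set.right_mem_Icc.2 hs)
    simpa using key
  · push Not at hx
    exact Or.inr ⟨a, le_rfl, fun s hs => (hx s hs).le⟩

theorem aux_lim_up (f f' : ℝ → ℝ) (a : ℝ) (hf : ∀ s, HasDerivAt f (f' s) s)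
    (hp : ∀ s, a ≤ s → 0 ≤ f' s) :
    ∃ L : EReal, Tendsto (fun s => (f s : EReal)) atTop (𝓝 L) := by
  have hm : MonotoneOn f (Set.Ici a) := by
    apply monotoneOn_of_deriv_nonneg (convex_Ici a)
    · exact fun x _ => (hf x).continuousAt.continuousWithinAt
    · exact fun x _ => (hf x).differentiableAt.differentiableWithinAt
    · intro x hx
      rw [interior_Ici] at hx
      rw [(hf x).deriv]
      exact hp x (le_of_lt hx)
  have hg : Monotone (fun s => (f (max s a) : EReal)) := by
    intro x y hxy
    exact EReal.coe_le_coe_iff.2 (hm (Set.mem_Ici.2 (le_max_right x a))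
      (Set.mem_Ici.2 (le_max_right y a)) (max_le_max_right a hxy))
  refine ⟨_, (tendsto_atTop_iSup hg).congr' ?_⟩
  filter_upwards [eventually_ge_atTop a] with s hs
  rw [max_eq_left hs]

theorem aux_neg (f : ℝ → ℝ) (l : Filter ℝ)
    (hf : ∃ L : EReal, Tendsto (fun s => ((- f s : ℝ) : EReal)) l (𝓝 L)) :
    ∃ L : EReal, Tendsto (fun s => (f s : EReal)) l (𝓝 L) := by
  obtain ⟨L, hL⟩ := hf
  refine ⟨-L, ?_⟩
  have := (continuous_neg.tendsto L).comp hL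
  refine this.congr fun s => ?_
  simp

theorem aux_lim_down (f f' : ℝ → ℝ) (a : ℝ) (hf : ∀ s, HasDerivAt f (f' s) s)
    (hp : ∀ s, a ≤ s → f' s ≤ 0) :
    ∃ L : EReal, Tendsto (fun s => (f s : EReal)) atTop (𝓝 L) :=
  aux_neg f _ (aux_lim_up (fun s => - f s) (fun s => - f' s) a (fun s => (hf s).neg)
    (fun s hs => by simpa using hp s hs))

theorem aux_fwd
    (h : ℝ) (hh : 0 < h) (τ ν : ℝ → ℝ)
    (hτ : ∀ s : ℝ, HasDerivAt τ
      ((τ s ^ 2 + h ^ 2) / (τ s ^ 2 + ν s ^ 2 + h ^ 2) * (1 + τ s * ν s)) s)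
    (hν : ∀ s : ℝ, HasDerivAt ν
      ((τ s * ν s - τ s ^ 2 * (τ s ^ 2 + h ^ 2)) / (τ s ^ 2 + ν s ^ 2 + h ^ 2)) s) :
    (∃ L : EReal, Tendsto (fun s => (τ s : EReal)) atTop (𝓝 L)) ∧
    (∃ L : EReal, Tendsto (fun s => (ν s : EReal)) atTop (𝓝 L)) := by
  have hD : ∀ s, 0 < τ s ^ 2 + ν s ^ 2 + h ^ 2 := fun s => by positivity
  -- eventual sign of τ
  have sτ := aux_cross τ _ 0 hτ (fun s _ h0 => by
    rw [h0]; have := hD s; rw [h0] at this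
    have : 0 < ((0:ℝ) ^ 2 + h ^ 2) / (0 ^ 2 + ν s ^ 2 + h ^ 2) := by positivity
    simpa using this)
  have hw : ∀ s, HasDerivAt (fun s => τ s * (τ s ^ 2 + h ^ 2) - ν s)
      ((3 * τ s ^ 2 + h ^ 2) *
        ((τ s ^ 2 + h ^ 2) / (τ s ^ 2 + ν s ^ 2 + h ^ 2) * (1 + τ s * ν s)) -
        ((τ s * ν s - τ s ^ 2 * (τ s ^ 2 + h ^ 2)) / (τ s ^ 2 + ν s ^ 2 + h ^ 2))) s := by
    intro s
    refine (((hτ s).fun_mul (((hτ s).fun_pow 2).add_const (h ^ 2))).fun_sub (hν s)).congr_deriv ?_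
    push_cast
    ring
  have hp : ∀ s, HasDerivAt (fun s => 1 + τ s * ν s)
      ((τ s ^ 2 + h ^ 2) / (τ s ^ 2 + ν s ^ 2 + h ^ 2) * (1 + τ s * ν s) * ν s + τ s *
        ((τ s * ν s - τ s ^ 2 * (τ s ^ 2 + h ^ 2)) / (τ s ^ 2 + ν s ^ 2 + h ^ 2))) s := by
    intro s
    exact ((hτ s).fun_mul (hν s)).const_add 1
  have hneg : ∀ s, 1 + τ s * ν s = 0 →
      (τ s * ν s - τ s ^ 2 * (τ s ^ 2 + h ^ 2)) / (τ s ^ 2 + ν s ^ 2 + h ^ 2) < 0 := by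
    intro s h0
    apply div_neg_of_neg_of_pos _ (hD s)
    have : 0 ≤ τ s ^ 2 * (τ s ^ 2 + h ^ 2) := by positivity
    linarith
  -- eventual sign of w
  have sw := fun a => aux_cross _ _ a hw (fun s _ h0 => by
    have e : ν s = τ s * (τ s ^ 2 + h ^ 2) := by linarith
    have e1 : τ s * ν s - τ s ^ 2 * (τ s ^ 2 + h ^ 2) = 0 := by rw [e]; ring
    have e2 : 0 < 1 + τ s * ν s := by
      have : 0 ≤ τ s ^ 2 * (τ s ^ 2 + h ^ 2) := by positivity
      linarith
    rw [e1, zero_div, sub_zero]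
    have := hD s
    positivity)
  have fτ : ∀ s, 0 ≤ (τ s ^ 2 + h ^ 2) / (τ s ^ 2 + ν s ^ 2 + h ^ 2) := fun s => by positivity
  have fin : ∀ a, ((∃ b, a ≤ b ∧ ∀ s, b ≤ s → 0 ≤ 1 + τ s * ν s) ∨
      (∃ b, a ≤ b ∧ ∀ s, b ≤ s → 1 + τ s * ν s ≤ 0)) →
      (∃ L : EReal, Tendsto (fun s => (τ s : EReal)) atTop (𝓝 L)) := by
    rintro a (⟨b, _, hb⟩ | ⟨b, _, hb⟩)
    · exact aux_lim_up τ _ b hτ fun s hs => mul_nonneg (fτ s) (hb s hs)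
    · exact aux_lim_down τ _ b hτ fun s hs => mul_nonpos_of_nonneg_of_nonpos (fτ s) (hb s hs)
  have eν : ∀ s, τ s * ν s - τ s ^ 2 * (τ s ^ 2 + h ^ 2) =
      - (τ s * (τ s * (τ s ^ 2 + h ^ 2) - ν s)) := fun s => by ring
  have up : ∀ b, (∀ s, b ≤ s → τ s * (τ s * (τ s ^ 2 + h ^ 2) - ν s) ≤ 0) →
      (∃ L : EReal, Tendsto (fun s => (ν s : EReal)) atTop (𝓝 L)) := fun b hb =>
    aux_lim_up ν _ b hν fun s hs => div_nonneg (by rw [eν]; linarith [hb s hs]) (hD s).le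
  have down : ∀ b, (∀ s, b ≤ s → 0 ≤ τ s * (τ s * (τ s ^ 2 + h ^ 2) - ν s)) →
      (∃ L : EReal, Tendsto (fun s => (ν s : EReal)) atTop (𝓝 L)) := fun b hb =>
    aux_lim_down ν _ b hν fun s hs =>
      div_nonpos_of_nonpos_of_nonneg (by rw [eν]; linarith [hb s hs]) (hD s).le
  have ne : ∀ s, 1 + τ s * ν s = 0 → τ s ≠ 0 := fun s h0 h1 => by simp [h1] at h0
  rcases sτ with ⟨a, _, ha⟩ | ⟨a, _, ha⟩
  · constructor
    · apply fin a
      have := aux_cross (fun s => -(1 + τ s * ν s)) _ a (fun s => (hp s).fun_neg)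
        (fun s hs h0 => by
          have h0 : 1 + τ s * ν s = 0 := by linarith
          have := mul_neg_of_pos_of_neg (lt_of_le_of_ne (ha s hs) (ne s h0).symm) (hneg s h0)
          rw [h0, mul_zero, zero_mul, zero_add]
          linarith)
      rcases this with ⟨b, h1, h2⟩ | ⟨b, h1, h2⟩
      · exact Or.inr ⟨b, h1, fun s hs => by linarith [h2 s hs]⟩
      · exact Or.inl ⟨b, h1, fun s hs => by linarith [h2 s hs]⟩
    · rcases sw a with ⟨b, h1, h2⟩ | ⟨b, h1, h2⟩
      · exact down b fun s hs => mul_nonneg (ha s (h1.trans hs)) (h2 s hs)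
      · exact up b fun s hs => mul_nonpos_of_nonneg_of_nonpos (ha s (h1.trans hs)) (h2 s hs)
  · constructor
    · apply fin a
      exact aux_cross _ _ a hp (fun s hs h0 => by
          have := mul_pos_of_neg_of_neg (lt_of_le_of_ne (ha s hs) (ne s h0)) (hneg s h0)
          rw [h0, mul_zero, zero_mul, zero_add]
          exact this)
    · rcases sw a with ⟨b, h1, h2⟩ | ⟨b, h1, h2⟩
      · exact up b fun s hs => mul_nonpos_of_nonpos_of_nonneg (ha s (h1.trans hs)) (h2 s hs)
      · exact down b fun s hs => mul_nonneg_of_nonpos_of_nonpos (ha s (h1.trans hs)) (h2 s hs)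

theorem aux_refl (f : ℝ → ℝ)
    (hf : ∃ L : EReal, Tendsto (fun s => ((- f (-s) : ℝ) : EReal)) atTop (𝓝 L)) :
    ∃ L : EReal, Tendsto (fun s => (f s : EReal)) atBot (𝓝 L) := by
  apply aux_neg
  obtain ⟨L, hL⟩ := hf
  refine ⟨L, ?_⟩
  have := hL.comp tendsto_neg_atBot_atTop
  refine this.congr fun s => ?_
  simp

theorem aux_refl_deriv (f : ℝ → ℝ) (d s : ℝ) (hf : HasDerivAt f d (-s)) :
    HasDerivAt (fun s => - f (-s)) d s := by
  have := (HasDerivAt.comp s hf (hasDerivAt_neg s)).fun_neg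
  exact this.congr_deriv (by ring)

/- Context: `h > 0`; `τ, ν : ℝ → ℝ` solve the ODE system of the generating curve of a
helicoidal surface of pitch `h` rotating with unit angular speed under mean curvature flow:
`τ' = ((τ² + h²)/(τ² + ν² + h²))(1 + τν)`, `ν' = (τν − τ²(τ² + h²))/(τ² + ν² + h²)`,
with `r = √(τ² + ν²)` and signed curvature `k = (τ(τ² + h²) − ν)/(r² + h²)`. -/

/-- Lemma 4.3. Both `τ` and `ν` have (possibly infinite) limits
as `s → +∞` and as `s → −∞`. -/
theorem tau_nu_have_limits
    (h : ℝ) (hh : 0 < h) (τ ν : ℝ → ℝ)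
    (hτ : ∀ s : ℝ, HasDerivAt τ
      ((τ s ^ 2 + h ^ 2) / (τ s ^ 2 + ν s ^ 2 + h ^ 2) * (1 + τ s * ν s)) s)
    (hν : ∀ s : ℝ, HasDerivAt ν
      ((τ s * ν s - τ s ^ 2 * (τ s ^ 2 + h ^ 2)) / (τ s ^ 2 + ν s ^ 2 + h ^ 2)) s) :
    ∃ L₁ L₂ L₃ L₄ : EReal,
      Tendsto (fun s => (τ s : EReal)) atTop (𝓝 L₁) ∧
      Tendsto (fun s => (ν s : EReal)) atTop (𝓝 L₂) ∧
      Tendsto (fun s => (τ s : EReal)) atBot (𝓝 L₃) ∧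
      Tendsto (fun s => (ν s : EReal)) atBot (𝓝 L₄) := by
  obtain ⟨⟨L₁, h1⟩, ⟨L₂, h2⟩⟩ := aux_fwd h hh τ ν hτ hν
  obtain ⟨h3, h4⟩ := aux_fwd h hh (fun s => - τ (-s)) (fun s => - ν (-s))
    (fun s => by
      have := aux_refl_deriv τ _ s (hτ (-s))
      simpa only [neg_sq, neg_mul_neg] using this)
    (fun s => by
      have := aux_refl_deriv ν _ s (hν (-s))
      simpa only [neg_sq, neg_mul_neg] using this)
  obtain ⟨L₃, h3⟩ := aux_refl τ h3
  obtain ⟨L₄, h4⟩ := aux_refl ν h4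
  exact ⟨L₁, L₂, L₃, L₄, h1, h2, h3, h4⟩
end

section
/- ν(s) tends to −∞ as s → +∞, and ν(s) tends to +∞ as s → −∞. -/
open Filter Topology

lemma aux_grow (f f' : ℝ → ℝ) (hf : ∀ s, HasDerivAt f (f' s) s) (a c : ℝ)
    (hc : ∀ s, a ≤ s → c ≤ f' s) : ∀ s, a ≤ s → f a + c * (s - a) ≤ f s := by
  intro s hs
  have := Convex.mul_sub_le_image_sub_of_le_deriv (convex_Ici a) (f := f) (C := c)
    (fun x _ => (hf x).continuousAt.continuousWithinAt)
    (fun x _ => (hf x).differentiableAt.differentiableWithinAt)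
    (fun x hx => by
      rw [(hf x).deriv]; exact hc x (interior_subset hx)) a (Set.self_mem_Ici) s hs hs
  linarith

lemma aux_reach (f f' : ℝ → ℝ) (hf : ∀ s, HasDerivAt f (f' s) s) (a c M : ℝ) (hc0 : 0 < c)
    (hc : ∀ s, a ≤ s → c ≤ f' s) : ∃ b, a ≤ b ∧ M ≤ f b := by
  have h0 : 0 ≤ |M - f a| / c := by positivity
  refine ⟨a + |M - f a| / c, by linarith, ?_⟩
  have h1 := aux_grow f f' hf a c hc (a + |M - f a| / c)
    (by linarith)
  have h2 : c * (a + |M - f a| / c - a) = |M - f a| := by field_simp; ring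
  have := le_abs_self (M - f a)
  linarith

lemma aux_barrier (f f' : ℝ → ℝ) (hf : ∀ s, HasDerivAt f (f' s) s) (a b : ℝ)
    (ha : b ≤ f a) (hb : ∀ s, a ≤ s → f s = b → 0 < f' s) : ∀ s, a ≤ s → b ≤ f s := by
  intro s hs
  have := image_le_of_deriv_right_lt_deriv_boundary (f := fun x => - f x) (f' := fun x => - f' x)
    (a := a) (b := s) (B := fun _ => -b) (B' := fun _ => 0)
    (fun x _ => (hf x).neg.continuousAt.continuousWithinAt)
    (fun x _ => (hf x).neg.hasDerivWithinAt) (by simpa using ha)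
    (fun x => hasDerivAt_const x _)
    (fun x hx hxe => by
      have := hb x hx.1 (by simpa using hxe)
      simpa using this) (x := s) ⟨hs, le_refl _⟩
  simpa using this

lemma aux_strict (f f' : ℝ → ℝ) (hf : ∀ s, HasDerivAt f (f' s) s) (a b : ℝ)
    (ha : b ≤ f a) (hb : ∀ s, a ≤ s → f s = b → 0 < f' s) : ∀ s, a < s → b < f s := by
  intro s hs
  have hB := aux_barrier f f' hf a b ha hb
  refine lt_of_le_of_ne (hB s hs.le) fun he => ?_
  have h0 := hb s hs.le he.symm
  have h1 := (hasDerivAt_iff_tendsto_slope.1 (hf s)).eventually (lt_mem_nhds h0)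
  have h2 : ∀ᶠ t in 𝓝[<] s, 0 < slope f s t :=
    h1.filter_mono (nhdsWithin_mono _ (fun x hx => ne_of_lt hx))
  have h3 : ∀ᶠ t in 𝓝[<] s, t ∈ Set.Ioo a s := Ioo_mem_nhdsLT hs
  obtain ⟨t, ht, hta, hts⟩ := (h2.and h3).exists
  have h4 := hB t hta.le
  rw [slope_def_field] at ht
  have h5 : (f t - f s) / (t - s) ≤ 0 :=
    div_nonpos_of_nonneg_of_nonpos (by linarith) (by linarith)
  linarith

lemma aux_main
    (h : ℝ) (hh : 0 < h) (τ ν : ℝ → ℝ)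
    (hτ : ∀ s : ℝ, HasDerivAt τ
      ((τ s ^ 2 + h ^ 2) / (τ s ^ 2 + ν s ^ 2 + h ^ 2) * (1 + τ s * ν s)) s)
    (hν : ∀ s : ℝ, HasDerivAt ν
      ((τ s * ν s - τ s ^ 2 * (τ s ^ 2 + h ^ 2)) / (τ s ^ 2 + ν s ^ 2 + h ^ 2)) s) :
    Tendsto ν atTop atBot := by
  have hD : ∀ s, 0 < τ s ^ 2 + ν s ^ 2 + h ^ 2 := fun s => by positivity
  have hh2 : 0 < h ^ 2 := by positivity
  have hνn := fun s => (hν s).neg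
  -- step 1
  have step1 : ∃ a, 0 ≤ τ a := by
    by_contra! hneg
    have hr : ∀ s, HasDerivAt (fun s => -(τ s ^ 2 + ν s ^ 2)) (-2 * τ s) s := by
      intro s
      have := (((hτ s).pow 2).add ((hν s).pow 2)).neg
      refine this.congr_deriv ?_
      have := (hD s).ne'
      field_simp
      ring
    set Q := τ 0 ^ 2 + ν 0 ^ 2 with hQ
    have hQb : ∀ s, 0 ≤ s → τ s ^ 2 + ν s ^ 2 ≤ Q := by
      intro s hs
      have := aux_grow _ _ hr 0 0 (fun t _ => by have := hneg t; linarith) s hs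
      linarith
    have hQ0 : 0 ≤ Q := by positivity
    have hνR : ∀ s, 0 ≤ s → |ν s| ≤ Q + 1 := by
      intro s hs
      have := hQb s hs
      refine abs_le_of_sq_le_sq ?_ (by linarith)
      nlinarith [sq_nonneg (τ s)]
    set δ := 1 / (2 * (Q + 1)) with hδ
    have hδ0 : 0 < δ := by positivity
    have hδR : δ * (Q + 1) = 1 / 2 := by rw [hδ]; field_simp
    have hlow : ∀ s, 0 ≤ s → -δ ≤ τ s → h ^ 2 / (2 * (Q + h ^ 2)) ≤
        ((τ s ^ 2 + h ^ 2) / (τ s ^ 2 + ν s ^ 2 + h ^ 2) * (1 + τ s * ν s)) := by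
      intro s hs hts
      have h1 : |τ s * ν s| ≤ 1 / 2 := by
        rw [abs_mul, ← hδR]
        have : |τ s| ≤ δ := abs_le.2 ⟨hts, by have := hneg s; linarith⟩
        exact mul_le_mul this (hνR s hs) (abs_nonneg _) hδ0.le
      have h2 := (abs_le.1 h1).1
      have h3 : h ^ 2 / (Q + h ^ 2) ≤ (τ s ^ 2 + h ^ 2) / (τ s ^ 2 + ν s ^ 2 + h ^ 2) := by
        apply div_le_div₀ (by positivity) (by nlinarith [sq_nonneg (τ s)]) (hD s)
        linarith [hQb s hs]
      have h4 : h ^ 2 / (2 * (Q + h ^ 2)) = h ^ 2 / (Q + h ^ 2) * (1 / 2) := by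
        field_simp
      rw [h4]
      exact mul_le_mul h3 (by linarith) (by norm_num) (by have := hD s; positivity)
    have hcpos : 0 < h ^ 2 / (2 * (Q + h ^ 2)) := by positivity
    by_cases hex : ∃ a, 0 ≤ a ∧ -δ ≤ τ a
    · obtain ⟨a, ha0, ha⟩ := hex
      have hb := aux_barrier τ _ hτ a (-δ) ha
        (fun s hs he => lt_of_lt_of_le hcpos (hlow s (ha0.trans hs) he.ge))
      obtain ⟨b, _, hb2⟩ := aux_reach τ _ hτ a _ 0 hcpos
        (fun s hs => hlow s (ha0.trans hs) (hb s hs))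
      linarith [hneg b]
    · push Not at hex
      obtain ⟨b, hb, hb2⟩ := aux_reach _ _ hr 0 (2 * δ) 1 (by positivity)
        (fun s hs => by have := hex s hs; linarith)
      nlinarith [sq_nonneg (τ b), sq_nonneg (ν b)]
  obtain ⟨a0, ha0⟩ := step1
  have hpos0 := aux_strict τ _ hτ a0 0 ha0 (fun s _ he => by
    have := hD s
    rw [he] at this ⊢
    have h1 : 0 < (0 ^ 2 + h ^ 2) / (0 ^ 2 + ν s ^ 2 + h ^ 2) := by positivity
    simpa using h1)
  obtain ⟨a, haa⟩ : ∃ a, a = a0 + 1 := ⟨_, rfl⟩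
  have hpos : ∀ s, a ≤ s → 0 < τ s := fun s hs => hpos0 s (by linarith)
  -- step 2
  have step2 : ∃ b, a ≤ b ∧ ν b ≤ 0 := by
    by_contra! hp
    have hτ0 := hpos a le_rfl
    have hν0 := hp a le_rfl
    have hmono : ∀ s, a ≤ s → τ a ≤ τ s := by
      intro s hs
      have := aux_grow τ _ hτ a 0 (fun t ht => by
        have := hpos t ht
        have := hp t ht
        positivity) s hs
      linarith
    have hlin : ∀ s, a ≤ s → ν s ≤ ν a + τ s / h ^ 2 := by
      intro s hs
      have hd := fun s => ((hτ s).div_const (h ^ 2)).sub (hν s)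
      have := aux_grow _ _ hd a 0 (fun t ht => by
        have h1 := hpos t ht
        have h2 := hp t ht
        have h3 := hD t
        have : (τ t ^ 2 + h ^ 2) / (τ t ^ 2 + ν t ^ 2 + h ^ 2) * (1 + τ t * ν t) / h ^ 2 -
          (τ t * ν t - τ t ^ 2 * (τ t ^ 2 + h ^ 2)) / (τ t ^ 2 + ν t ^ 2 + h ^ 2)
          = (τ t ^ 2 * (1 + τ t * ν t) + h ^ 2 + h ^ 2 * (τ t ^ 2 * (τ t ^ 2 + h ^ 2))) /
            (h ^ 2 * (τ t ^ 2 + ν t ^ 2 + h ^ 2)) := by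
          field_simp
          ring
        rw [this]
        positivity) s hs
      simp at this
      have : 0 < τ a / h ^ 2 := by positivity
      linarith
    obtain ⟨A, hA⟩ : ∃ A, A = ν a / τ a + 1 / h ^ 2 := ⟨_, rfl⟩
    have hA0 : 0 < A := by rw [hA]; positivity
    have hνA : ∀ s, a ≤ s → ν s ≤ A * τ s := by
      intro s hs
      have h1 := hlin s hs
      have h2 : ν a ≤ ν a / τ a * τ s := by
        rw [div_mul_eq_mul_div, le_div_iff₀ hτ0]
        exact mul_le_mul_of_nonneg_left (hmono s hs) hν0.le
      have : A * τ s = ν a / τ a * τ s + τ s / h ^ 2 := by rw [hA]; ring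
      linarith
    have hDA : ∀ s, a ≤ s → τ s ^ 2 + ν s ^ 2 + h ^ 2 ≤ (1 + A ^ 2) * (τ s ^ 2 + h ^ 2) := by
      intro s hs
      have h1 : ν s ^ 2 ≤ (A * τ s) ^ 2 := pow_le_pow_left₀ (hp s hs).le (hνA s hs) 2
      nlinarith [mul_nonneg (sq_nonneg A) hh2.le]
    have hgrow : ∀ s, a ≤ s → 1 / (1 + A ^ 2) ≤
        (τ s ^ 2 + h ^ 2) / (τ s ^ 2 + ν s ^ 2 + h ^ 2) * (1 + τ s * ν s) := by
      intro s hs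
      have h1 : 1 / (1 + A ^ 2) ≤ (τ s ^ 2 + h ^ 2) / (τ s ^ 2 + ν s ^ 2 + h ^ 2) := by
        rw [div_le_div_iff₀ (by positivity) (hD s)]
        linarith [hDA s hs]
      have h2 : 0 < τ s * ν s := mul_pos (hpos s hs) (hp s hs)
      have h3 : 0 ≤ (τ s ^ 2 + h ^ 2) / (τ s ^ 2 + ν s ^ 2 + h ^ 2) := by positivity
      nlinarith
    obtain ⟨b, hab, hb⟩ := aux_reach τ _ hτ a _ (A + 1 + h) (by positivity) hgrow
    have hbig : ∀ s, b ≤ s → A + 1 + h ≤ τ s := by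
      intro s hs
      have := aux_grow τ _ hτ b 0 (fun t ht => by
        have := hpos t (hab.trans ht)
        have := hp t (hab.trans ht)
        positivity) s hs
      linarith
    obtain ⟨c, hbc, hc⟩ := aux_reach _ _ hνn b (1 / (2 * (1 + A ^ 2))) 0 (by positivity) (by
      intro s hs
      have h1 := hbig s hs
      have has := hab.trans hs
      have h2 := hDA s has
      have h3 := hνA s has
      have h4 := hpos s has
      rw [← neg_div, div_le_div_iff₀ (by positivity) (hD s)]
      have h5 : τ s * ν s ≤ A * τ s ^ 2 := by nlinarith
      have h6 : h ^ 2 ≤ τ s ^ 2 := pow_le_pow_left₀ hh.le (by linarith) 2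
      have h7 : A + 1 ≤ τ s ^ 2 := by nlinarith
      have h8 : τ s ^ 2 ≤ -(τ s * ν s - τ s ^ 2 * (τ s ^ 2 + h ^ 2)) := by
        nlinarith [mul_le_mul_of_nonneg_left h7 (sq_nonneg (τ s)),
          mul_nonneg (sq_nonneg (τ s)) hh2.le]
      have h9 : 0 < 1 + A ^ 2 := by positivity
      nlinarith [mul_le_mul_of_nonneg_left h6 h9.le, mul_le_mul_of_nonneg_left h8 h9.le])
    have := hp c (hab.trans hbc)
    simp at hc
    linarith
  obtain ⟨b, hab, hb⟩ := step2
  have hνneg : ∀ s, b ≤ s → ν s ≤ 0 := by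
    intro s hs
    have := aux_barrier _ _ hνn b 0 (by simpa using hb) (fun t ht he => by
      have h1 := hpos t (hab.trans ht)
      have h2 := hD t
      have h3 : ν t = 0 := by simpa using he
      rw [← neg_div]
      apply div_pos _ h2
      rw [h3]
      have : 0 < τ t ^ 2 * (τ t ^ 2 + h ^ 2) := by positivity
      linarith) s hs
    simpa using this
  have hanti : ∀ c, b ≤ c → ∀ s, c ≤ s → ν s ≤ ν c := by
    intro c hc s hs
    have := aux_grow _ _ hνn c 0 (fun t ht => by
      have h1 := hpos t (hab.trans (hc.trans ht))
      have h2 := hD t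
      have h3 := hνneg t (hc.trans ht)
      rw [← neg_div]
      apply div_nonneg _ h2.le
      have : 0 < τ t ^ 2 * (τ t ^ 2 + h ^ 2) := by positivity
      nlinarith) s hs
    simp at this
    linarith
  have hreach : ∀ M, ∃ c, b ≤ c ∧ ν c ≤ M := by
    intro M
    by_contra! hM
    obtain ⟨L, hL⟩ : ∃ L, L = |M| + 1 := ⟨_, rfl⟩
    have hL0 : 0 < L := by rw [hL]; positivity
    have hνL : ∀ s, b ≤ s → -L ≤ ν s := by
      intro s hs
      have := hM s hs
      have := neg_abs_le M
      linarith
    obtain ⟨δ, hδ⟩ : ∃ δ, δ = min (τ b) (1 / (2 * L)) := ⟨_, rfl⟩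
    have hδ0 : 0 < δ := by
      rw [hδ]; exact lt_min (hpos b hab) (by positivity)
    have hδL : δ * L ≤ 1 / 2 := by
      have : δ ≤ 1 / (2 * L) := by rw [hδ]; exact min_le_right _ _
      calc δ * L ≤ 1 / (2 * L) * L := by gcongr
        _ = 1 / 2 := by field_simp
    have hτδ := aux_barrier τ _ hτ b δ (by rw [hδ]; exact min_le_left _ _) (fun s hs he => by
      have h1 := hνL s hs
      have h2 := hD s
      have h3 : 0 < 1 + τ s * ν s := by rw [he]; nlinarith
      positivity)
    obtain ⟨c, hbc, hc⟩ := aux_reach _ _ hνn b (δ ^ 2 * (h ^ 2 / (L ^ 2 + h ^ 2))) (-M)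
      (by positivity) (by
      intro s hs
      have h1 := hτδ s hs
      have h2 := hD s
      have h3 := hνneg s hs
      have h4 := hνL s hs
      have h5 : δ ^ 2 ≤ τ s ^ 2 := pow_le_pow_left₀ hδ0.le h1 2
      have h6 : h ^ 2 / (L ^ 2 + h ^ 2) ≤ (τ s ^ 2 + h ^ 2) / (τ s ^ 2 + ν s ^ 2 + h ^ 2) := by
        rw [div_le_div_iff₀ (by positivity) h2]
        have : ν s ^ 2 ≤ L ^ 2 := by nlinarith
        nlinarith [mul_nonneg (sq_nonneg (τ s)) (sq_nonneg L)]
      have h7 : δ ^ 2 * (h ^ 2 / (L ^ 2 + h ^ 2)) ≤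
          τ s ^ 2 * ((τ s ^ 2 + h ^ 2) / (τ s ^ 2 + ν s ^ 2 + h ^ 2)) :=
        mul_le_mul h5 h6 (by positivity) (by positivity)
      refine h7.trans ?_
      rw [← neg_div, ← mul_div_assoc]
      apply div_le_div_of_nonneg_right _ h2.le
      nlinarith)
    have := hM c hbc
    simp at hc
    linarith
  rw [tendsto_atTop_atBot]
  intro M
  obtain ⟨c, hbc, hc⟩ := hreach M
  exact ⟨c, fun s hs => (hanti c hbc s hs).trans hc⟩

/-- Lemma 4.4. `ν → −∞` as `s → +∞` and `ν → +∞` as `s → −∞`. -/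
theorem nu_tendsto_infinity
    (h : ℝ) (hh : 0 < h) (τ ν : ℝ → ℝ)
    (hτ : ∀ s : ℝ, HasDerivAt τ
      ((τ s ^ 2 + h ^ 2) / (τ s ^ 2 + ν s ^ 2 + h ^ 2) * (1 + τ s * ν s)) s)
    (hν : ∀ s : ℝ, HasDerivAt ν
      ((τ s * ν s - τ s ^ 2 * (τ s ^ 2 + h ^ 2)) / (τ s ^ 2 + ν s ^ 2 + h ^ 2)) s) :
    Tendsto ν atTop atBot ∧ Tendsto ν atBot atTop := by
  refine ⟨aux_main h hh τ ν hτ hν, ?_⟩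
  have key := aux_main h hh (fun s => - τ (-s)) (fun s => - ν (-s))
    (fun s => by
      have := ((hτ (-s)).comp s (hasDerivAt_neg s)).neg
      refine this.congr_deriv ?_
      simp)
    (fun s => by
      have := ((hν (-s)).comp s (hasDerivAt_neg s)).neg
      refine this.congr_deriv ?_
      simp)
  have h2 := tendsto_neg_atBot_atTop.comp (key.comp tendsto_neg_atBot_atTop)
  simpa [Function.comp_def] using h2
end

section
/- r(s) tends to +∞ as s → +∞ and as s → −∞, and r has exactly one extremum, a global minimum: there is a unique s₀ ∈ ℝ with τ(s₀) = 0 (equivalently, with (r²)'(s₀) = 0, since (r²)' = 2τ), τ(s) < 0 for all s < s₀ and τ(s) > 0 for all s > s₀, so r is strictly decreasing on (−∞, s₀] and strictly increasing on [s₀, ∞). -/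
open Filter Topology

def HSol (h : ℝ) (τ ν : ℝ → ℝ) : Prop :=
  (∀ s : ℝ, HasDerivAt τ
      ((τ s ^ 2 + h ^ 2) / (τ s ^ 2 + ν s ^ 2 + h ^ 2) * (1 + τ s * ν s)) s) ∧
  (∀ s : ℝ, HasDerivAt ν
      ((τ s * ν s - τ s ^ 2 * (τ s ^ 2 + h ^ 2)) / (τ s ^ 2 + ν s ^ 2 + h ^ 2)) s)

lemma HSol.refl {h : ℝ} {τ ν : ℝ → ℝ} (H : HSol h τ ν) :
    HSol h (fun s => - τ (-s)) (fun s => - ν (-s)) := by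
  refine ⟨fun s => ?_, fun s => ?_⟩
  · have := ((H.1 (-s)).comp s (hasDerivAt_neg s)).neg
    refine this.congr_deriv ?_
    ring
  · have := ((H.2 (-s)).comp s (hasDerivAt_neg s)).neg
    refine this.congr_deriv ?_
    ring

lemma HSol.q {h : ℝ} (hh : 0 < h) {τ ν : ℝ → ℝ} (H : HSol h τ ν) (s : ℝ) :
    HasDerivAt (fun s => τ s ^ 2 + ν s ^ 2) (2 * τ s) s := by
  refine (((H.1 s).pow 2).add ((H.2 s).pow 2)).congr_deriv ?_
  have : τ s ^ 2 + ν s ^ 2 + h ^ 2 ≠ 0 := by positivity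
  field_simp
  ring

lemma HSol.key {h : ℝ} (hh : 0 < h) {τ ν : ℝ → ℝ} (H : HSol h τ ν) {a b M : ℝ} (hab : a ≤ b)
    (hM : ∀ s ∈ Set.Icc a b, τ s ^ 2 + ν s ^ 2 ≤ M) :
    h ^ 2 / (M + h ^ 2) / 2 * (b - a) ≤
      τ b * Real.exp (M / 4 * (τ b ^ 2 + ν b ^ 2))
        - τ a * Real.exp (M / 4 * (τ a ^ 2 + ν a ^ 2)) := by
  have hM0 : 0 ≤ M := le_trans (by positivity) (hM a ⟨le_rfl, hab⟩)
  have hd : ∀ s, HasDerivAt (fun s => τ s * Real.exp (M / 4 * (τ s ^ 2 + ν s ^ 2))) 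
      (((τ s ^ 2 + h ^ 2) / (τ s ^ 2 + ν s ^ 2 + h ^ 2) * (1 + τ s * ν s) + M / 2 * τ s ^ 2)
        * Real.exp (M / 4 * (τ s ^ 2 + ν s ^ 2))) s := by
    intro s
    refine ((H.1 s).mul (((H.q hh s).const_mul (M / 4)).exp)).congr_deriv ?_
    ring
  have hdiff : Differentiable ℝ (fun s => τ s * Real.exp (M / 4 * (τ s ^ 2 + ν s ^ 2))) :=
    fun s => (hd s).differentiableAt
  refine (convex_Icc a b).mul_sub_le_image_sub_of_le_deriv hdiff.continuous.continuousOn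
    hdiff.differentiableOn ?_ a ⟨le_rfl, hab⟩ b ⟨hab, le_rfl⟩ hab
  intro s hs
  rw [(hd s).deriv]
  have hq := hM s (interior_subset hs)
  set x := τ s
  set y := ν s
  set A := (x ^ 2 + h ^ 2) / (x ^ 2 + y ^ 2 + h ^ 2) with hA
  have hA1 : A ≤ 1 := by
    rw [hA, div_le_one (by positivity)]; nlinarith [sq_nonneg y]
  have hA0 : h ^ 2 / (M + h ^ 2) ≤ A := by
    rw [hA]
    gcongr
    nlinarith [sq_nonneg x]
  have hc0 : 0 < h ^ 2 / (M + h ^ 2) := by positivity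
  set c := h ^ 2 / (M + h ^ 2)
  have hxy : (x * y) ^ 2 ≤ M * x ^ 2 := by
    rw [mul_pow, mul_comm]; gcongr; nlinarith [sq_nonneg x]
  have h1 : A * (x * y) ^ 2 ≤ M * x ^ 2 := by
    nlinarith [sq_nonneg (x * y)]
  have h2 : 0 ≤ A * (1 + x * y) ^ 2 := by
    have : 0 ≤ A := by linarith
    positivity
  have h3 : c / 2 ≤ A * (1 + x * y) + M / 2 * x ^ 2 := by nlinarith
  have h4 : 1 ≤ Real.exp (M / 4 * (x ^ 2 + y ^ 2)) := Real.one_le_exp (by positivity)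
  nlinarith

lemma HSol.cont {h : ℝ} (hh : 0 < h) {τ ν : ℝ → ℝ} (H : HSol h τ ν) :
    Continuous (fun s => τ s ^ 2 + ν s ^ 2) :=
  continuous_iff_continuousAt.2 fun s => (H.q hh s).continuousAt

lemma HSol.pos {h : ℝ} (hh : 0 < h) {τ ν : ℝ → ℝ} (H : HSol h τ ν) {a b : ℝ} (hab : a < b)
    (ha : 0 ≤ τ a) : 0 < τ b := by
  obtain ⟨M, hM⟩ := (isCompact_Icc (a := a) (b := b)).bddAbove_image (H.cont hh).continuousOn
  have hM' : ∀ s ∈ Set.Icc a b, τ s ^ 2 + ν s ^ 2 ≤ M := fun s hs => hM ⟨s, hs, rfl⟩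
  have hM0 : 0 ≤ M := le_trans (by positivity) (hM' a ⟨le_rfl, hab.le⟩)
  have hk := H.key hh hab.le hM'
  have h1 : 0 < h ^ 2 / (M + h ^ 2) / 2 * (b - a) := mul_pos (by positivity) (by linarith)
  have h2 : 0 ≤ τ a * Real.exp (M / 4 * (τ a ^ 2 + ν a ^ 2)) := by positivity
  exact pos_of_mul_pos_left (by linarith : 0 < τ b * Real.exp (M / 4 * (τ b ^ 2 + ν b ^ 2)))
    (Real.exp_pos _).le

lemma HSol.unb {h : ℝ} (hh : 0 < h) {τ ν : ℝ → ℝ} (H : HSol h τ ν) (a M : ℝ) :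
    ∃ s, a ≤ s ∧ M < τ s ^ 2 + ν s ^ 2 := by
  by_contra! hcon
  have hM0 : 0 ≤ M := le_trans (by positivity) (hcon a le_rfl)
  set B := (1 + M) * Real.exp (M / 4 * M) with hB
  have hc : 0 < h ^ 2 / (M + h ^ 2) / 2 := by positivity
  set c := h ^ 2 / (M + h ^ 2) / 2 with hcdef
  have hW : ∀ s, a ≤ s → τ s * Real.exp (M / 4 * (τ s ^ 2 + ν s ^ 2)) ≤ B := by
    intro s hs
    have hq := hcon s hs
    have : τ s ≤ 1 + M := by nlinarith [sq_nonneg (ν s), sq_nonneg (τ s - 1)]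
    rw [hB]
    gcongr
  set Wa := τ a * Real.exp (M / 4 * (τ a ^ 2 + ν a ^ 2)) with hWa
  have hWaB := hW a le_rfl
  have hb : a ≤ a + (B - Wa + 1) / c := by
    have : 0 ≤ (B - Wa + 1) / c := div_nonneg (by linarith) hc.le
    linarith
  have hk := H.key hh hb (fun s hs => hcon s hs.1)
  have h2 := hW _ hb
  rw [← hcdef, ← hWa] at hk
  have h3 : c * (a + (B - Wa + 1) / c - a) = B - Wa + 1 := by field_simp; ring
  linarith

lemma HSol.ex {h : ℝ} (hh : 0 < h) {τ ν : ℝ → ℝ} (H : HSol h τ ν) : ∃ s, 0 < τ s := by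
  by_contra! hcon
  obtain ⟨s, hs, hs'⟩ := H.unb hh 0 (τ 0 ^ 2 + ν 0 ^ 2)
  have : Antitone (fun s => τ s ^ 2 + ν s ^ 2) :=
    antitone_of_deriv_nonpos (fun s => (H.q hh s).differentiableAt) fun s => by
      rw [(H.q hh s).deriv]; linarith [hcon s]
  exact absurd (this hs) (not_le.2 hs')

lemma HSol.mono {h : ℝ} (hh : 0 < h) {τ ν : ℝ → ℝ} (H : HSol h τ ν) {a : ℝ} (ha : 0 ≤ τ a) :
    StrictMonoOn (fun s => Real.sqrt (τ s ^ 2 + ν s ^ 2)) (Set.Ici a) := by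
  have : StrictMonoOn (fun s => τ s ^ 2 + ν s ^ 2) (Set.Ici a) := by
    refine strictMonoOn_of_deriv_pos (convex_Ici a) (H.cont hh).continuousOn fun s hs => ?_
    rw [interior_Ici] at hs
    rw [(H.q hh s).deriv]
    have := H.pos hh hs ha
    linarith
  intro x hx y hy hxy
  exact Real.sqrt_lt_sqrt (by positivity) (this hx hy hxy)

lemma HSol.top {h : ℝ} (hh : 0 < h) {τ ν : ℝ → ℝ} (H : HSol h τ ν) :
    Tendsto (fun s => Real.sqrt (τ s ^ 2 + ν s ^ 2)) atTop atTop := by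
  obtain ⟨a, ha⟩ := H.ex hh
  rw [tendsto_atTop_atTop]
  intro M
  obtain ⟨s, hs, hs'⟩ := H.unb hh a (M ^ 2)
  refine ⟨s, fun t ht => ?_⟩
  calc M ≤ Real.sqrt (τ s ^ 2 + ν s ^ 2) := Real.le_sqrt_of_sq_le hs'.le
    _ ≤ _ := (H.mono hh ha.le).monotoneOn hs (le_trans hs ht : a ≤ t) ht

/- Context: `h > 0`; `τ, ν : ℝ → ℝ` solve the ODE system of the generating curve of a
helicoidal surface of pitch `h` rotating with unit angular speed under mean curvature flow:
`τ' = ((τ² + h²)/(τ² + ν² + h²))(1 + τν)`, `ν' = (τν − τ²(τ² + h²))/(τ² + ν² + h²)`,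
with `r = √(τ² + ν²)` and signed curvature `k = (τ(τ² + h²) − ν)/(r² + h²)`. -/

/-- Lemma 4.7. `r → ∞` in each direction and `r` has exactly one
extremum, a global minimum: there is a unique zero `s₀` of `τ` (where `(r²)' = 2τ`),
`τ < 0` before it and `τ > 0` after it, and `r` is strictly decreasing on `(−∞, s₀]`
and strictly increasing on `[s₀, ∞)`. -/
theorem r_tendsto_infinity_unique_minimum
    (h : ℝ) (hh : 0 < h) (τ ν : ℝ → ℝ)
    (hτ : ∀ s : ℝ, HasDerivAt τ
      ((τ s ^ 2 + h ^ 2) / (τ s ^ 2 + ν s ^ 2 + h ^ 2) * (1 + τ s * ν s)) s)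
    (hν : ∀ s : ℝ, HasDerivAt ν
      ((τ s * ν s - τ s ^ 2 * (τ s ^ 2 + h ^ 2)) / (τ s ^ 2 + ν s ^ 2 + h ^ 2)) s)
    (r : ℝ → ℝ) (hr : ∀ s : ℝ, r s = Real.sqrt (τ s ^ 2 + ν s ^ 2)) :
    Tendsto r atTop atTop ∧ Tendsto r atBot atTop ∧
    ∃ s₀ : ℝ, τ s₀ = 0 ∧ (∀ s : ℝ, τ s = 0 → s = s₀) ∧
      (∀ s : ℝ, s < s₀ → τ s < 0) ∧ (∀ s : ℝ, s₀ < s → 0 < τ s) ∧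
      StrictAntiOn r (Set.Iic s₀) ∧ StrictMonoOn r (Set.Ici s₀) := by
  have H : HSol h τ ν := ⟨hτ, hν⟩
  have H' := H.refl
  obtain rfl : r = fun s => Real.sqrt (τ s ^ 2 + ν s ^ 2) := funext hr
  refine ⟨H.top hh, ?_, ?_⟩
  · have := (H'.top hh).comp tendsto_neg_atBot_atTop
    refine this.congr fun s => ?_
    simp
  obtain ⟨a, ha⟩ := H.ex hh
  obtain ⟨b, hb⟩ := H'.ex hh
  have hcont : Continuous τ := continuous_iff_continuousAt.2 fun s => (hτ s).continuousAt
  obtain ⟨s₀, hs₀⟩ : ∃ s, τ s = 0 :=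
    mem_range_of_exists_le_of_exists_ge hcont ⟨-b, by linarith⟩ ⟨a, ha.le⟩
  have hp : ∀ s : ℝ, s₀ < s → 0 < τ s := fun s hs => H.pos hh hs hs₀.ge
  have hn : ∀ s : ℝ, s < s₀ → τ s < 0 := fun s hs => by
    by_contra! hc
    exact absurd (H.pos hh hs hc) (by rw [hs₀]; exact lt_irrefl _)
  refine ⟨s₀, hs₀, fun s hs => ?_, hn, hp, ?_, H.mono hh hs₀.ge⟩
  · rcases lt_trichotomy s s₀ with hl | he | hl
    · linarith [hn s hl]
    · exact he
    · linarith [hp s hl]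
  · intro x hx y hy hxy
    have := H'.mono hh (a := -s₀) (by simp [hs₀])
      (show -y ∈ Set.Ici (-s₀) from Set.mem_Ici.2 (neg_le_neg (Set.mem_Iic.1 hy)))
      (show -x ∈ Set.Ici (-s₀) from Set.mem_Ici.2 (neg_le_neg (Set.mem_Iic.1 hx))) (neg_lt_neg hxy)
    simpa using this
end

section
/- The limiting angle between the tangent and the position vector of the generating curve is π/2: τ(s)/r(s) → 0 and ν(s)/r(s) → −1 as s → +∞, while τ(s)/r(s) → 0 and ν(s)/r(s) → +1 as s → −∞. Equivalently, the complex ratio r·T/X = (τ − iν)/r tends to +i as s → +∞ and to −i as s → −∞. -/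
open Filter Topology

lemma lgd_growth {f f' : ℝ → ℝ} {a c : ℝ} (hf : ∀ s, a ≤ s → HasDerivAt f (f' s) s)
    (hc : ∀ s, a ≤ s → c ≤ f' s) (s : ℝ) (hs : a ≤ s) : f a + c * (s - a) ≤ f s := by
  have := (convex_Icc a s).mul_sub_le_image_sub_of_le_deriv (f := f) (C := c)
    (fun x hx => (hf x hx.1).continuousAt.continuousWithinAt)
    (fun x hx => by
      rw [interior_Icc] at hx
      exact (hf x hx.1.le).differentiableAt.differentiableWithinAt)
    (fun x hx => by
      rw [interior_Icc] at hx
      rw [(hf x hx.1.le).deriv]; exact hc x hx.1.le)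
    a ⟨le_rfl, hs⟩ s ⟨hs, le_rfl⟩ hs
  linarith

lemma lgd_unbdd {f f' : ℝ → ℝ} {a c M : ℝ} (hf : ∀ s, a ≤ s → HasDerivAt f (f' s) s)
    (hc0 : 0 < c) (hc : ∀ s, a ≤ s → c ≤ f' s) (hM : ∀ s, a ≤ s → f s ≤ M) : False := by
  have h0 := hM a le_rfl
  have hs : a ≤ a + (M - f a + 1) / c := by
    have : 0 ≤ (M - f a + 1) / c := div_nonneg (by linarith) hc0.le
    linarith
  have h1 := lgd_growth hf hc _ hs
  have h2 := hM _ hs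
  have h3 : c * (a + (M - f a + 1) / c - a) = M - f a + 1 := by field_simp; ring
  linarith

lemma lgd_stay {f f' : ℝ → ℝ} {a B : ℝ} (hf : ∀ s, a ≤ s → HasDerivAt f (f' s) s)
    (ha : f a ≤ B) (hb : ∀ s, a ≤ s → f s = B → f' s < 0) (s : ℝ) (hs : a ≤ s) : f s ≤ B := by
  refine image_le_of_deriv_right_lt_deriv_boundary (f := f) (f' := f') (a := a) (b := s)
    (B := fun _ => B) (B' := fun _ => 0)
    (fun x hx => (hf x hx.1).continuousAt.continuousWithinAt)
    (fun x hx => (hf x hx.1).hasDerivWithinAt) ha (fun x => hasDerivAt_const x B)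
    (fun x hx hxB => hb x hx.1 hxB) ⟨hs, le_rfl⟩

lemma lgd_trap {f f' : ℝ → ℝ} {a c B : ℝ} (hf : ∀ s, a ≤ s → HasDerivAt f (f' s) s)
    (hc0 : 0 < c) (hb : ∀ s, a ≤ s → B ≤ f s → f' s ≤ -c) :
    ∃ b, ∀ s, b ≤ s → f s ≤ B := by
  by_cases hex : ∃ b, a ≤ b ∧ f b ≤ B
  · obtain ⟨b, hab, hfb⟩ := hex
    refine ⟨b, lgd_stay (fun s hs => hf s (hab.trans hs)) hfb fun s hs he => ?_⟩
    have := hb s (hab.trans hs) he.ge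
    linarith
  · push Not at hex
    exact (lgd_unbdd (f := fun s => - f s) (f' := fun s => - f' s) (a := a) (c := c) (M := -B)
      (fun s hs => (hf s hs).neg) hc0
      (fun s hs => by have := hb s hs (hex s hs).le; linarith)
      (fun s hs => by have := hex s hs; linarith)).elim

lemma lgd_bdd_false (h : ℝ) (hh : 0 < h) (τ ν : ℝ → ℝ)
    (hτ : ∀ s : ℝ, HasDerivAt τ
      ((τ s ^ 2 + h ^ 2) / (τ s ^ 2 + ν s ^ 2 + h ^ 2) * (1 + τ s * ν s)) s)
    (hR : ∀ s, HasDerivAt (fun s => τ s ^ 2 + ν s ^ 2) (2 * τ s) s)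
    (a σ M : ℝ) (hσ : σ = 1 ∨ σ = -1) (hM : 0 ≤ M) (hs : ∀ s, a ≤ s → 0 ≤ σ * τ s)
    (hb : ∀ s, a ≤ s → τ s ^ 2 + ν s ^ 2 ≤ M ^ 2) : False := by
  have hσ2 : σ ^ 2 = 1 := by rcases hσ with rfl | rfl <;> norm_num
  have hσ1 : |σ| = 1 := by rcases hσ with rfl | rfl <;> norm_num
  refine lgd_unbdd (f := fun s => τ s + σ * (M / 2) * (τ s ^ 2 + ν s ^ 2))
    (a := a) (c := h ^ 2 / (M ^ 2 + h ^ 2)) (M := M + M / 2 * M ^ 2)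
    (fun s _ => (hτ s).add ((hR s).const_mul (σ * (M / 2)))) (by positivity) ?_ ?_
  · intro s has
    have hD : 0 < τ s ^ 2 + ν s ^ 2 + h ^ 2 := by positivity
    set q := (τ s ^ 2 + h ^ 2) / (τ s ^ 2 + ν s ^ 2 + h ^ 2) with hq
    have hq0 : 0 ≤ q := by positivity
    have hq1 : q ≤ 1 := by
      rw [hq, div_le_one hD]; nlinarith [sq_nonneg (ν s)]
    have hqc : h ^ 2 / (M ^ 2 + h ^ 2) ≤ q := by
      rw [hq]
      have := hb s has
      gcongr ?_ / ?_
      · nlinarith [sq_nonneg (τ s)]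
      · linarith
    have hνM : |σ * ν s| ≤ M := by
      rw [abs_mul, hσ1, one_mul]
      exact abs_le_of_sq_le_sq (by nlinarith [hb s has, sq_nonneg (τ s)]) hM
    have h1 : τ s * ν s = (σ * τ s) * (σ * ν s) := by linear_combination (-(τ s * ν s)) * hσ2
    have h2 := hs s has
    have h3 := (abs_le.1 hνM).1
    have h4 : -(q * (σ * τ s) * M) ≤ q * ((σ * τ s) * (σ * ν s)) := by
      nlinarith [mul_nonneg hq0 h2, mul_nonneg (mul_nonneg hq0 h2) (by linarith : 0 ≤ σ * ν s + M)]
    have h5 : q * (σ * τ s) * M ≤ (σ * τ s) * M := by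
      nlinarith [mul_nonneg (mul_nonneg (sub_nonneg.2 hq1) h2) hM]
    rw [h1]
    nlinarith
  · intro s has
    have h0 := hb s has
    have h1 : τ s ≤ M := (le_abs_self _).trans (abs_le_of_sq_le_sq (by nlinarith [sq_nonneg (ν s)]) hM)
    have h2 : σ * (M / 2) ≤ M / 2 := by
      have : σ ≤ 1 := by rcases hσ with rfl | rfl <;> norm_num
      nlinarith
    have h3 : 0 ≤ τ s ^ 2 + ν s ^ 2 := by positivity
    have h4 : M / 2 * (τ s ^ 2 + ν s ^ 2) ≤ M / 2 * M ^ 2 := by gcongr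
    show τ s + σ * (M / 2) * (τ s ^ 2 + ν s ^ 2) ≤ _
    nlinarith [mul_le_mul_of_nonneg_right h2 h3]

lemma lgd_top (h : ℝ) (hh : 0 < h) (τ ν : ℝ → ℝ)
    (hτ : ∀ s : ℝ, HasDerivAt τ
      ((τ s ^ 2 + h ^ 2) / (τ s ^ 2 + ν s ^ 2 + h ^ 2) * (1 + τ s * ν s)) s)
    (hν : ∀ s : ℝ, HasDerivAt ν
      ((τ s * ν s - τ s ^ 2 * (τ s ^ 2 + h ^ 2)) / (τ s ^ 2 + ν s ^ 2 + h ^ 2)) s) :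
    (∀ᶠ s in atTop, 0 < τ s) ∧ Tendsto (fun s => ν s / τ s) atTop atBot := by
  have hD : ∀ s, 0 < τ s ^ 2 + ν s ^ 2 + h ^ 2 := fun s => by positivity
  have hR : ∀ s, HasDerivAt (fun s => τ s ^ 2 + ν s ^ 2) (2 * τ s) s := by
    intro s
    have hd := (hD s).ne'
    refine (((hτ s).pow 2).add ((hν s).pow 2)).congr_deriv ?_
    push_cast
    field_simp
    ring
  have hex : ∃ a, 0 ≤ τ a := by
    by_contra hcon
    push Not at hcon
    have hanti : ∀ s, 0 ≤ s → τ s ^ 2 + ν s ^ 2 ≤ τ 0 ^ 2 + ν 0 ^ 2 := fun s hs =>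
      lgd_stay (f := fun s => τ s ^ 2 + ν s ^ 2) (fun s _ => hR s) le_rfl
        (fun s _ _ => by linarith [hcon s]) s hs
    refine lgd_bdd_false h hh τ ν hτ hR 0 (-1) (Real.sqrt (τ 0 ^ 2 + ν 0 ^ 2)) (Or.inr rfl)
      (Real.sqrt_nonneg _) (fun s _ => by linarith [hcon s]) (fun s hs => ?_)
    rw [Real.sq_sqrt (by positivity)]
    exact hanti s hs
  obtain ⟨a, ha⟩ := hex
  have hder0 : ∀ s, τ s = 0 →
      0 < ((τ s ^ 2 + h ^ 2) / (τ s ^ 2 + ν s ^ 2 + h ^ 2) * (1 + τ s * ν s)) := by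
    intro s hs
    have := hD s
    have e : 1 + τ s * ν s = 1 := by rw [hs]; ring
    rw [e]; positivity
  have hnn : ∀ s, a ≤ s → 0 ≤ τ s := by
    intro s hs
    have := lgd_stay (f := fun s => - τ s) (a := a) (B := 0) (fun s _ => (hτ s).neg)
      (by simpa using ha) (fun s _ h0 => by
        have := hder0 s (by linarith)
        linarith) s hs
    linarith
  have hpos : ∀ s, a < s → 0 < τ s := by
    intro s hs
    rcases (hnn s hs.le).lt_or_eq with h1 | h1
    · exact h1
    · exfalso
      have hmin : IsLocalMin τ s := by
        filter_upwards [lt_mem_nhds hs] with x hx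
        rw [← h1]; exact hnn x hx.le
      have := hmin.hasDerivAt_eq_zero (hτ s)
      linarith [hder0 s h1.symm]
  have hmono : ∀ s t, a ≤ s → s ≤ t → τ s ^ 2 + ν s ^ 2 ≤ τ t ^ 2 + ν t ^ 2 := by
    intro s t has hst
    have := lgd_growth (c := 0) (fun x (_ : s ≤ x) => hR x)
      (fun x hx => by linarith [hnn x (has.trans hx)]) t hst
    simpa using this
  have hbig : ∀ M : ℝ, 0 ≤ M → ∃ b, a < b ∧ ∀ s, b ≤ s → M ≤ τ s ^ 2 + ν s ^ 2 := by
    intro M hM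
    by_contra hcon
    push Not at hcon
    refine lgd_bdd_false h hh τ ν hτ hR (a + 1) 1 (Real.sqrt M) (Or.inl rfl)
      (Real.sqrt_nonneg _) (fun s hs => by linarith [hnn s (by linarith)]) (fun s hs => ?_)
    rw [Real.sq_sqrt hM]
    obtain ⟨t, ht, h2⟩ := hcon s (by linarith)
    exact (hmono s t (by linarith) ht).trans h2.le
  refine ⟨eventually_atTop.2 ⟨a + 1, fun s hs => hpos s (by linarith)⟩, ?_⟩
  rw [tendsto_atBot]
  intro B
  rw [eventually_atTop]
  obtain ⟨b, hab, hb⟩ := hbig (h ^ 2 + 2 * |B|) (by positivity)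
  refine lgd_trap (f := fun s => ν s / τ s) (a := b) (c := h / 2)
    (fun s hs => (hν s).div (hτ s) (hpos s (by linarith)).ne') (by positivity) ?_
  intro s hs hB
  have ht := hpos s (by linarith)
  have hRb := hb s hs
  have hd := hD s
  have hBu : -|B| * τ s ≤ ν s := by
    have h1 : -|B| ≤ ν s / τ s := (neg_abs_le B).trans hB
    rwa [le_div_iff₀ ht] at h1
  have key : ((τ s * ν s - τ s ^ 2 * (τ s ^ 2 + h ^ 2)) / (τ s ^ 2 + ν s ^ 2 + h ^ 2) * τ s -
      ν s * ((τ s ^ 2 + h ^ 2) / (τ s ^ 2 + ν s ^ 2 + h ^ 2) * (1 + τ s * ν s))) / τ s ^ 2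
      = -((τ s ^ 2 + ν s ^ 2) * τ s * (τ s ^ 2 + h ^ 2) + ν s * h ^ 2) /
        (τ s ^ 2 * (τ s ^ 2 + ν s ^ 2 + h ^ 2)) := by
    field_simp
    ring
  rw [key, div_le_iff₀ (by positivity)]
  generalize τ s = t at *
  generalize hv : ν s = v at *
  set R := t ^ 2 + v ^ 2 with hRdef
  have hAb := abs_nonneg B
  -- need: h/2 * t^2 * (R + h^2) ≤ R t (t^2+h^2) + v h^2
  have e1 : R + h ^ 2 ≤ 2 * R := by nlinarith
  have e2 : h / 2 * (t ^ 2 * (R + h ^ 2)) ≤ h * t ^ 2 * R := by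
    nlinarith [mul_le_mul_of_nonneg_left e1 (by positivity : 0 ≤ h / 2 * t ^ 2)]
  have hR0 : 0 ≤ R := by positivity
  have e3 : 2 * (h * t ^ 2 * R) ≤ R * t * (t ^ 2 + h ^ 2) := by
    nlinarith [mul_nonneg (mul_nonneg hR0 ht.le) (sq_nonneg (t - h))]
  have e4 : -(|B| * t * h ^ 2) ≤ v * h ^ 2 := by
    nlinarith [mul_le_mul_of_nonneg_right hBu (sq_nonneg h)]
  have e5 : 2 * (|B| * t * h ^ 2) ≤ R * t * (t ^ 2 + h ^ 2) := by
    have f1 : 2 * |B| * (t * h ^ 2) ≤ R * (t * h ^ 2) := by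
      apply mul_le_mul_of_nonneg_right _ (by positivity)
      nlinarith [sq_nonneg h]
    have f2 : 0 ≤ R * t * t ^ 2 := by positivity
    nlinarith
  linarith

lemma lgd_lim (τ ν : ℝ → ℝ) (hp : ∀ᶠ s in atTop, 0 < τ s)
    (hu : Tendsto (fun s => ν s / τ s) atTop atBot) :
    Tendsto (fun s => τ s / Real.sqrt (τ s ^ 2 + ν s ^ 2)) atTop (𝓝 0) ∧
    Tendsto (fun s => ν s / Real.sqrt (τ s ^ 2 + ν s ^ 2)) atTop (𝓝 (-1)) := by
  have hw : Tendsto (fun s => (ν s / τ s)⁻¹) atTop (𝓝 0) := tendsto_inv_atBot_zero.comp hu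
  have hneg : ∀ᶠ s in atTop, ν s < 0 := by
    filter_upwards [hp, hu.eventually (eventually_lt_atBot 0)] with s h1 h2
    by_contra h3
    exact absurd h2 (not_lt.2 (div_nonneg (not_lt.1 h3) h1.le))
  have hsq : ∀ s, ν s < 0 →
      Real.sqrt (τ s ^ 2 + ν s ^ 2) = - ν s * Real.sqrt (((ν s / τ s)⁻¹) ^ 2 + 1) := by
    intro s hs
    have : τ s ^ 2 + ν s ^ 2 = (- ν s) ^ 2 * (((ν s / τ s)⁻¹) ^ 2 + 1) := by
      have hs' := hs.ne
      rw [inv_div]; field_simp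
    rw [this, Real.sqrt_mul (by positivity), Real.sqrt_sq (by linarith)]
  have hden : Tendsto (fun s => Real.sqrt (((ν s / τ s)⁻¹) ^ 2 + 1)) atTop (𝓝 1) := by
    have := ((hw.pow 2).add_const 1).sqrt
    simpa using this
  constructor
  · have := (hw.neg.div hden one_ne_zero)
    rw [neg_zero, zero_div] at this
    refine this.congr' ?_
    filter_upwards [hneg] with s hs
    show -(ν s / τ s)⁻¹ / Real.sqrt (((ν s / τ s)⁻¹) ^ 2 + 1) = _
    rw [hsq s hs]
    have : Real.sqrt (((ν s / τ s)⁻¹) ^ 2 + 1) ≠ 0 := by positivity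
    rw [inv_div] at *
    field_simp
  · have := ((tendsto_const_nhds (x := (-1 : ℝ))).div hden one_ne_zero)
    rw [div_one] at this
    refine this.congr' ?_
    filter_upwards [hneg] with s hs
    show -1 / Real.sqrt (((ν s / τ s)⁻¹) ^ 2 + 1) = _
    rw [hsq s hs]
    have : Real.sqrt (((ν s / τ s)⁻¹) ^ 2 + 1) ≠ 0 := by positivity
    have := hs.ne
    field_simp

lemma lgd_cplx {l : Filter ℝ} {τ ν r : ℝ → ℝ} {c : ℝ}
    (h1 : Tendsto (fun s => τ s / r s) l (𝓝 0)) (h2 : Tendsto (fun s => ν s / r s) l (𝓝 c)) :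
    Tendsto (fun s => ((τ s : ℂ) - (ν s : ℂ) * Complex.I) / (r s : ℂ)) l
      (𝓝 (-(c : ℂ) * Complex.I)) := by
  have h1' := (Complex.continuous_ofReal.tendsto _).comp h1
  have h2' := (Complex.continuous_ofReal.tendsto _).comp h2
  have := h1'.sub (h2'.mul_const Complex.I)
  have e : ((0 : ℝ) : ℂ) - (c : ℂ) * Complex.I = -(c : ℂ) * Complex.I := by
    push_cast; ring
  rw [e] at this
  refine this.congr fun s => ?_
  simp only [Function.comp, Complex.ofReal_div]
  ring

/-- Lemma 4.8. The limiting angle between the tangent and the position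
vector is `π/2`: `τ/r → 0` and `ν/r → −1` as `s → +∞`, while `τ/r → 0` and `ν/r → +1`
as `s → −∞` (i.e. `rT/X = (τ − iν)/r → ±i`). -/
theorem limiting_growing_direction
    (h : ℝ) (hh : 0 < h) (τ ν : ℝ → ℝ)
    (hτ : ∀ s : ℝ, HasDerivAt τ
      ((τ s ^ 2 + h ^ 2) / (τ s ^ 2 + ν s ^ 2 + h ^ 2) * (1 + τ s * ν s)) s)
    (hν : ∀ s : ℝ, HasDerivAt ν
      ((τ s * ν s - τ s ^ 2 * (τ s ^ 2 + h ^ 2)) / (τ s ^ 2 + ν s ^ 2 + h ^ 2)) s)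
    (r : ℝ → ℝ) (hr : ∀ s : ℝ, r s = Real.sqrt (τ s ^ 2 + ν s ^ 2)) :
    Tendsto (fun s => τ s / r s) atTop (𝓝 0) ∧
    Tendsto (fun s => ν s / r s) atTop (𝓝 (-1)) ∧
    Tendsto (fun s => τ s / r s) atBot (𝓝 0) ∧
    Tendsto (fun s => ν s / r s) atBot (𝓝 1) ∧
    Tendsto (fun s => ((τ s : ℂ) - (ν s : ℂ) * Complex.I) / (r s : ℂ))
      atTop (𝓝 Complex.I) ∧
    Tendsto (fun s => ((τ s : ℂ) - (ν s : ℂ) * Complex.I) / (r s : ℂ))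
      atBot (𝓝 (-Complex.I)) := by
  have hre : r = fun s => Real.sqrt (τ s ^ 2 + ν s ^ 2) := funext hr
  obtain ⟨hp, hu⟩ := lgd_top h hh τ ν hτ hν
  obtain ⟨t1, t2⟩ := lgd_lim τ ν hp hu
  obtain ⟨hp', hu'⟩ := lgd_top h hh (fun s => - τ (-s)) (fun s => - ν (-s))
    (fun s => by
      have := ((hτ (-s)).scomp s (hasDerivAt_neg s)).neg
      refine this.congr_deriv ?_
      simp)
    (fun s => by
      have := ((hν (-s)).scomp s (hasDerivAt_neg s)).neg
      refine this.congr_deriv ?_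
      simp)
  obtain ⟨b1, b2⟩ := lgd_lim _ _ hp' hu'
  have T1 : Tendsto (fun s => τ s / r s) atTop (𝓝 0) := by rw [hre]; exact t1
  have T2 : Tendsto (fun s => ν s / r s) atTop (𝓝 (-1)) := by rw [hre]; exact t2
  have B1 : Tendsto (fun s => τ s / r s) atBot (𝓝 0) := by
    have := (b1.comp tendsto_neg_atBot_atTop).neg
    rw [neg_zero] at this
    refine this.congr fun s => ?_
    simp [hre, neg_div]
  have B2 : Tendsto (fun s => ν s / r s) atBot (𝓝 1) := by
    have := (b2.comp tendsto_neg_atBot_atTop).neg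
    rw [neg_neg] at this
    refine this.congr fun s => ?_
    simp [hre, neg_div]
  refine ⟨T1, T2, B1, B2, ?_, ?_⟩
  · simpa using lgd_cplx T1 T2
  · simpa using lgd_cplx B1 B2
end

section
/- Each arm of the generating curve spirals infinitely many times around the origin: the function s ↦ ∫₀ˢ (−ν(t)/r(t)²) dt, which gives the change of the polar angle φ of the curve X = r e^{iφ}, tends to +∞ both as s → +∞ and as s → −∞. -/
open Filter Topology

lemma aux_antitone (f f' : ℝ → ℝ) (a : ℝ) (hf : ∀ s, HasDerivAt f (f' s) s)
    (h0 : ∀ s, a ≤ s → f' s ≤ 0) : ∀ s, a ≤ s → f s ≤ f a := by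
  intro s hs
  have : AntitoneOn f (Set.Ici a) := by
    apply antitoneOn_of_deriv_nonpos (convex_Ici a)
    · exact fun x _ => (hf x).continuousAt.continuousWithinAt
    · exact fun x _ => (hf x).differentiableAt.differentiableWithinAt
    · intro x hx
      rw [(hf x).deriv]
      rw [interior_Ici] at hx
      exact h0 x (le_of_lt hx)
  exact this (Set.mem_Ici.2 le_rfl) hs hs

lemma aux_forward
    (h : ℝ) (hh : 0 < h) (τ ν : ℝ → ℝ)
    (hτ : ∀ s : ℝ, HasDerivAt τ
      ((τ s ^ 2 + h ^ 2) / (τ s ^ 2 + ν s ^ 2 + h ^ 2) * (1 + τ s * ν s)) s)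
    (hν : ∀ s : ℝ, HasDerivAt ν
      ((τ s * ν s - τ s ^ 2 * (τ s ^ 2 + h ^ 2)) / (τ s ^ 2 + ν s ^ 2 + h ^ 2)) s)
    (hpos : ∀ s : ℝ, 0 < τ s ^ 2 + ν s ^ 2) :
    Tendsto (fun s => ∫ t in (0:ℝ)..s, -ν t / (τ t ^ 2 + ν t ^ 2)) atTop atTop := by
  have hh2 : 0 < h ^ 2 := by positivity
  have hD : ∀ s, 0 < τ s ^ 2 + ν s ^ 2 + h ^ 2 := fun s => by positivity
  set L : ℝ → ℝ := fun s => ν s - Real.arctan (τ s / h) / h with hLdef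
  set L' : ℝ → ℝ := fun s =>
    -((1 + τ s ^ 2 * (τ s ^ 2 + h ^ 2)) / (τ s ^ 2 + ν s ^ 2 + h ^ 2)) with hL'def
  have hL : ∀ s, HasDerivAt L (L' s) s := by
    intro s
    have h1 := (hν s).sub ((((hτ s).div_const h).arctan).div_const h)
    refine HasDerivAt.congr_deriv (f := L) h1 ?_
    have := (hD s).ne'
    have h3 : τ s ^ 2 + h ^ 2 ≠ 0 := by positivity
    have h4 : 1 + (τ s / h) ^ 2 = (τ s ^ 2 + h ^ 2) / h ^ 2 := by
      field_simp
      ring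
    rw [h4]
    simp only [hL'def]
    field_simp
    ring
  have hL'0 : ∀ s, L' s ≤ 0 := by
    intro s
    have := hD s
    simp only [hL'def]
    rw [neg_nonpos]
    positivity
  have hanti : Antitone L := fun a b hab =>
    aux_antitone L L' a hL (fun s _ => hL'0 s) b hab
  set B : ℝ := Real.pi / 2 / h with hB
  have hBb : ∀ s, |L s - ν s| ≤ B := by
    intro s
    have : L s - ν s = - (Real.arctan (τ s / h) / h) := by simp only [hLdef]; ring
    rw [this, abs_neg, abs_div, abs_of_pos hh, hB]
    have h1 := Real.arctan_lt_pi_div_two (τ s / h)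
    have h2 := Real.neg_pi_div_two_lt_arctan (τ s / h)
    have : |Real.arctan (τ s / h)| ≤ Real.pi / 2 := abs_le.2 ⟨h2.le, h1.le⟩
    gcongr
  have hLlim : Tendsto L atTop atBot := by
    apply tendsto_atTop_atBot_of_antitone hanti
    intro b
    by_contra! hcon
    set N : ℝ := |b| + |L 0| + B with hN
    have hνb : ∀ s, 0 ≤ s → ν s ^ 2 ≤ N ^ 2 := by
      intro s hs
      apply sq_le_sq'
      · have := (abs_le.1 (hBb s)).2
        have := hcon s
        have := neg_abs_le b
        have := abs_nonneg (L 0)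
        linarith
      · have := (abs_le.1 (hBb s)).1
        have := hanti hs
        have := le_abs_self (L 0)
        have := abs_nonneg b
        linarith
    set K : ℝ := N ^ 2 + h ^ 2 with hK
    have hKpos : 0 < K := by positivity
    set c : ℝ := 1 / (2 * (K + 1)) with hc
    have hcpos : 0 < c := by positivity
    have key : ∀ s, 0 ≤ s → L s + c * s ≤ L 0 + c * 0 := by
      apply aux_antitone (fun s => L s + c * s) (fun s => L' s + c * 1) 0
      · intro s
        exact (hL s).add ((hasDerivAt_id s).const_mul c)
      · intro s hs
        have h1 := hνb s hs
        have h2 : c ≤ (1 + τ s ^ 2 * (τ s ^ 2 + h ^ 2)) / (τ s ^ 2 + ν s ^ 2 + h ^ 2) := by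
          rw [hc, div_le_div_iff₀ (by positivity) (hD s)]
          have ht : 0 ≤ τ s ^ 2 := sq_nonneg _
          have e1 : τ s ^ 2 + ν s ^ 2 + h ^ 2 ≤ (K + 1) * (τ s ^ 2 + 1) := by
            nlinarith
          have e2 : τ s ^ 2 + 1 ≤ (1 + τ s ^ 2 * (τ s ^ 2 + h ^ 2)) * 2 := by
            nlinarith [sq_nonneg (τ s ^ 2 - 1), mul_nonneg ht hh2.le, sq_nonneg (τ s ^ 2)]
          calc 1 * (τ s ^ 2 + ν s ^ 2 + h ^ 2) ≤ (K + 1) * (τ s ^ 2 + 1) := by linarith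
            _ ≤ (K + 1) * ((1 + τ s ^ 2 * (τ s ^ 2 + h ^ 2)) * 2) := by gcongr
            _ = _ := by ring
        simp only [hL'def]
        linarith
    have hb0 := hcon 0
    have h1 := key ((L 0 - b) / c) (div_nonneg (by linarith) hcpos.le)
    have h2 := hcon ((L 0 - b) / c)
    have h3 : c * ((L 0 - b) / c) = L 0 - b := by field_simp
    linarith
  obtain ⟨s0, hs0⟩ := (tendsto_atTop_atBot.1 hLlim) (-1 - B)
  have hνle : ∀ s, s0 ≤ s → ν s ≤ -1 := by
    intro s hs
    have := hs0 s hs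
    have := (abs_le.1 (hBb s)).1
    linarith
  set A : ℝ := τ s0 ^ 2 + 2 with hA
  have hApos : 0 < A := by positivity
  have hτb : ∀ s, s0 ≤ s → τ s ^ 2 ≤ A := by
    intro s hs
    have hd : ∀ x, HasDerivAt (fun x => τ x ^ 2) (2 * τ x *
      ((τ x ^ 2 + h ^ 2) / (τ x ^ 2 + ν x ^ 2 + h ^ 2) * (1 + τ x * ν x))) x := by
      intro x
      have := (hτ x).pow 2
      refine HasDerivAt.congr_deriv (f := fun x => τ x ^ 2) this ?_
      push_cast
      ring
    refine image_le_of_deriv_right_lt_deriv_boundary (f := fun x => τ x ^ 2)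
      (a := s0) (b := s) (B := fun _ => A) (B' := fun _ => 0)
      (fun x _ => (hd x).continuousAt.continuousWithinAt)
      (fun x _ => (hd x).hasDerivWithinAt) (by simp only [hA]; linarith)
      (fun x => hasDerivAt_const x A) ?_ (Set.mem_Icc.2 ⟨hs, le_rfl⟩)
    intro x hx hxA
    have hxA : τ x ^ 2 = A := hxA
    have hn := hνle x hx.1
    have hP : 0 < (τ x ^ 2 + h ^ 2) / (τ x ^ 2 + ν x ^ 2 + h ^ 2) := by
      have := hD x
      positivity
    have h2 : 2 ≤ τ x ^ 2 := by rw [hxA, hA]; nlinarith [sq_nonneg (τ s0)]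
    have h3 : τ x * (1 + τ x * ν x) < 0 := by nlinarith [sq_nonneg (τ x - 1)]
    have := mul_neg_of_pos_of_neg hP h3
    linarith
  set C : ℝ := 1 + A * (A + h ^ 2) with hC
  have hCpos : 0 < C := by positivity
  set F : ℝ → ℝ := fun s => ∫ t in (0:ℝ)..s, -ν t / (τ t ^ 2 + ν t ^ 2) with hFdef
  have hcont : Continuous (fun t => -ν t / (τ t ^ 2 + ν t ^ 2)) := by
    have c1 : Continuous τ := continuous_iff_continuousAt.2 fun x => (hτ x).continuousAt
    have c2 : Continuous ν := continuous_iff_continuousAt.2 fun x => (hν x).continuousAt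
    exact c2.neg.div ((c1.pow 2).add (c2.pow 2)) fun x => (hpos x).ne'
  have hF : ∀ s, HasDerivAt F (-ν s / (τ s ^ 2 + ν s ^ 2)) s := fun s =>
    hcont.integral_hasStrictDerivAt 0 s |>.hasDerivAt
  have key : ∀ s, s0 ≤ s → - L s - C * F s ≤ - L s0 - C * F s0 := by
    apply aux_antitone (fun s => - L s - C * F s)
      (fun s => - L' s - C * (-ν s / (τ s ^ 2 + ν s ^ 2))) s0
    · intro s
      exact (hL s).neg.sub ((hF s).const_mul C)
    · intro s hs
      have h1 := hτb s hs
      have h2 := hνle s hs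
      have h3 := hpos s
      have : (1 + τ s ^ 2 * (τ s ^ 2 + h ^ 2)) / (τ s ^ 2 + ν s ^ 2 + h ^ 2)
          ≤ C * (-ν s / (τ s ^ 2 + ν s ^ 2)) := by
        rw [← mul_div_assoc]
        have e1 : 1 + τ s ^ 2 * (τ s ^ 2 + h ^ 2) ≤ C := by rw [hC]; gcongr
        have e2 : C ≤ C * -ν s := by nlinarith
        apply div_le_div₀ (by linarith) (by linarith) h3 (by linarith)
      simp only [hL'def]
      linarith
  have hlow : Tendsto (fun s => (- L s + (L s0 + C * F s0)) / C) atTop atTop := by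
    apply Tendsto.atTop_div_const hCpos
    exact tendsto_atTop_add_const_right _ _ (tendsto_neg_atBot_atTop.comp hLlim)
  apply tendsto_atTop_mono' _ _ hlow
  filter_upwards [eventually_ge_atTop s0] with s hs
  rw [div_le_iff₀ hCpos]
  have := key s hs
  linarith

/-- Lemma 4.9. Each arm spirals infinitely many times around the origin:
the change of polar angle `s ↦ ∫₀ˢ (−ν/r²)` tends to `+∞` in both directions.
(It is assumed, as the paper proves, that the curve avoids the origin: `r > 0`.) -/
theorem polar_angle_tendsto_infinity
    (h : ℝ) (hh : 0 < h) (τ ν : ℝ → ℝ)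
    (hτ : ∀ s : ℝ, HasDerivAt τ
      ((τ s ^ 2 + h ^ 2) / (τ s ^ 2 + ν s ^ 2 + h ^ 2) * (1 + τ s * ν s)) s)
    (hν : ∀ s : ℝ, HasDerivAt ν
      ((τ s * ν s - τ s ^ 2 * (τ s ^ 2 + h ^ 2)) / (τ s ^ 2 + ν s ^ 2 + h ^ 2)) s)
    (hpos : ∀ s : ℝ, 0 < τ s ^ 2 + ν s ^ 2) :
    Tendsto (fun s => ∫ t in (0:ℝ)..s, -ν t / (τ t ^ 2 + ν t ^ 2)) atTop atTop ∧
    Tendsto (fun s => ∫ t in (0:ℝ)..s, -ν t / (τ t ^ 2 + ν t ^ 2)) atBot atTop := by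
  refine ⟨aux_forward h hh τ ν hτ hν hpos, ?_⟩
  have h1 := aux_forward h hh (fun s => -τ (-s)) (fun s => -ν (-s)) ?_ ?_ ?_
  · have h2 := h1.comp tendsto_neg_atBot_atTop
    refine h2.congr fun s => ?_
    have h3 := intervalIntegral.integral_comp_neg (a := 0) (b := -s)
      (fun t => ν t / (τ t ^ 2 + ν t ^ 2))
    simp only [Function.comp, neg_sq, neg_neg]
    rw [h3, neg_neg, neg_zero, intervalIntegral.integral_symm, ← intervalIntegral.integral_neg]
    simp only [neg_div]
  · intro s
    have := ((hτ (-s)).scomp s (hasDerivAt_neg s)).neg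
    refine HasDerivAt.congr_deriv (f := fun s => -τ (-s)) this ?_
    simp
  · intro s
    have := ((hν (-s)).scomp s (hasDerivAt_neg s)).neg
    refine HasDerivAt.congr_deriv (f := fun s => -ν (-s)) this ?_
    simp
  · intro s
    simpa using hpos (-s)
end

section
/- As h → 0⁺, the solutions (τ_h, ν_h) converge to the constant solution (0, A) in the C^k sense, uniformly on compact subsets of ℝ, for every k: for each nonnegative integer k and each compact interval K ⊂ ℝ, sup_{s ∈ K} |τ_h^{(k)}(s) − τ₀^{(k)}(s)| → 0 and sup_{s ∈ K} |ν_h^{(k)}(s) − ν₀^{(k)}(s)| → 0 as h → 0⁺, where (τ₀, ν₀) is the constant function (0, A). -/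
open Filter Topology


lemma iter_aux (Φ : ℝ × ℝ × ℝ → ℝ)
    (hΦ : ContDiffOn ℝ (⊤ : ℕ∞) Φ {p : ℝ × ℝ × ℝ | p ≠ (0, 0, 0)})
    (A : ℝ)
    (τ ν : ℝ → ℝ → ℝ)
    (hτ : ∀ h ∈ Set.Ioc (0:ℝ) 1, ∀ s : ℝ,
      HasDerivAt (τ h) (1 + ν h s * Φ (τ h s, ν h s, h)) s)
    (hν : ∀ h ∈ Set.Ioc (0:ℝ) 1, ∀ s : ℝ,
      HasDerivAt (ν h) (-(τ h s) * Φ (τ h s, ν h s, h)) s)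
    (hconst : 1 + A * Φ (0, A, 0) = 0) (k : ℕ) :
    ∀ G : ℝ × ℝ × ℝ → ℝ, ContDiffOn ℝ (⊤ : ℕ∞) G {p : ℝ × ℝ × ℝ | p ≠ (0, 0, 0)} →
    ∃ H : ℝ × ℝ × ℝ → ℝ, ContDiffOn ℝ (⊤ : ℕ∞) H {p : ℝ × ℝ × ℝ | p ≠ (0, 0, 0)} ∧
      H (0, A, 0) = (if k = 0 then G (0, A, 0) else 0) ∧
      ∀ h ∈ Set.Ioc (0:ℝ) 1, ∀ s : ℝ,
        iteratedDeriv k (fun s => G (τ h s, ν h s, h)) s = H (τ h s, ν h s, h) := by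
  have hU : IsOpen {p : ℝ × ℝ × ℝ | p ≠ (0, 0, 0)} := isOpen_ne
  induction k with
  | zero => exact fun G hG => ⟨G, hG, by simp, by simp⟩
  | succ k ih =>
    intro G hG
    obtain ⟨H, hH, hH0, hHs⟩ := ih
      (fun p => fderiv ℝ G p (1 + p.2.1 * Φ p, -p.1 * Φ p, 0)) (by
        apply ContDiffOn.clm_apply
        · exact hG.fderiv_of_isOpen hU (by simp)
        · apply ContDiffOn.prodMk
          · exact contDiffOn_const.add ((contDiff_snd.fst).contDiffOn.mul hΦ)
          · apply ContDiffOn.prodMk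
            · exact contDiff_fst.neg.contDiffOn.mul hΦ
            · exact contDiffOn_const)
    refine ⟨H, hH, ?_, ?_⟩
    · rw [hH0]
      have : ((1 + A * Φ (0, A, 0), -0 * Φ (0, A, 0), 0) : ℝ × ℝ × ℝ) = 0 := by
        rw [hconst]; simp
      simp only [this]
      simp
    · intro h hh s
      rw [iteratedDeriv_succ', ← hHs h hh s]
      congr 1
      ext t
      have hne : ((τ h t, ν h t, h) : ℝ × ℝ × ℝ) ∈ {p : ℝ × ℝ × ℝ | p ≠ (0, 0, 0)} := by
        simp [hh.1.ne']
      have h1 : HasFDerivAt G (fderiv ℝ G (τ h t, ν h t, h)) (τ h t, ν h t, h) :=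
        ((hG.contDiffAt (hU.mem_nhds hne)).differentiableAt (by simp)).hasFDerivAt
      exact (h1.comp_hasDerivAt t
        ((hτ h hh t).prodMk ((hν h hh t).prodMk (hasDerivAt_const t h)))).deriv

lemma growth_aux (E E' : ℝ → ℝ) (C h r T : ℝ) (hC : 0 ≤ C) (hh : 0 < h)
    (hE : ∀ s, HasDerivAt E (E' s) s) (h0 : E 0 = 0)
    (hb : ∀ s, E s ≤ r → E' s ≤ C * (E s + h ^ 2))
    (hr : h ^ 2 * Real.exp ((2 * C + 1) * T) ≤ r) :
    ∀ s ∈ Set.Icc 0 T, E s ≤ h ^ 2 * Real.exp ((2 * C + 1) * T) := by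
  have hmono : ∀ s ≤ T, h ^ 2 * Real.exp ((2 * C + 1) * s) ≤
      h ^ 2 * Real.exp ((2 * C + 1) * T) := by
    intro s hs; gcongr
  intro s hs
  refine le_trans ?_ (hmono s hs.2)
  refine image_le_of_deriv_right_lt_deriv_boundary (f := E) (f' := E') (a := 0) (b := T)
    (B := fun s => h ^ 2 * Real.exp ((2 * C + 1) * s))
    (B' := fun s => h ^ 2 * (Real.exp ((2 * C + 1) * s) * (2 * C + 1)))
    (fun x _ => (hE x).continuousAt.continuousWithinAt) (fun x _ => (hE x).hasDerivWithinAt)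
    (by rw [h0]; positivity) ?_ ?_ hs
  · intro x
    have := ((hasDerivAt_id x).const_mul (2 * C + 1)).exp.const_mul (h ^ 2)
    simpa using this
  · intro x hx hEx
    have h1 := hb x (by rw [hEx]; exact (hmono x hx.2.le).trans hr)
    refine h1.trans_lt ?_
    have h2 : h ^ 2 ≤ h ^ 2 * Real.exp ((2 * C + 1) * x) := by
      have : 1 ≤ Real.exp ((2 * C + 1) * x) := Real.one_le_exp (by have := hx.1; positivity)
      nlinarith [sq_nonneg h]
    have h3 : 0 < h ^ 2 := by positivity
    rw [← mul_assoc, ← hEx]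
    rw [← hEx] at h2
    nlinarith

lemma c0_aux (Φ : ℝ × ℝ × ℝ → ℝ)
    (hΦ : ContDiffOn ℝ (⊤ : ℕ∞) Φ {p : ℝ × ℝ × ℝ | p ≠ (0, 0, 0)})
    (A : ℝ) (hA : A ≠ 0)
    (τ ν : ℝ → ℝ → ℝ)
    (hτ : ∀ h ∈ Set.Ioc (0:ℝ) 1, ∀ s : ℝ,
      HasDerivAt (τ h) (1 + ν h s * Φ (τ h s, ν h s, h)) s)
    (hν : ∀ h ∈ Set.Ioc (0:ℝ) 1, ∀ s : ℝ,
      HasDerivAt (ν h) (-(τ h s) * Φ (τ h s, ν h s, h)) s)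
    (hinit : ∀ h ∈ Set.Ioc (0:ℝ) 1, τ h 0 = 0 ∧ ν h 0 = A)
    (hconst : 1 + A * Φ (0, A, 0) = 0) (T δ : ℝ) (hδ : 0 < δ) :
    ∀ᶠ h in 𝓝[>] (0:ℝ), ∀ s, |s| ≤ T →
      dist ((τ h s, ν h s, h) : ℝ × ℝ × ℝ) (0, A, 0) < δ := by
  have hU : IsOpen {p : ℝ × ℝ × ℝ | p ≠ (0, 0, 0)} := isOpen_ne
  have hc : ContDiffAt ℝ 1 Φ (0, A, 0) :=
    (hΦ.contDiffAt (hU.mem_nhds (by simp [hA]))).of_le (by exact_mod_cast le_top)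
  obtain ⟨L, W, hW, hL⟩ := hc.exists_lipschitzOnWith
  obtain ⟨ρ, hρ, hball⟩ := Metric.mem_nhds_iff.1 hW
  have key : ∀ x y h : ℝ, dist ((x, y, h) : ℝ × ℝ × ℝ) (0, A, 0) < ρ →
      |2 * x * (1 + A * Φ (x, y, h))| ≤ 4 * |A| * L * ((x ^ 2 + (y - A) ^ 2) + h ^ 2) := by
    intro x y h hd
    have h1 := hL.dist_le_mul _ (hball hd) _ (mem_of_mem_nhds hW)
    have h2 : dist ((x, y, h) : ℝ × ℝ × ℝ) (0, A, 0) ≤ |x| + |y - A| + |h| := by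
      simp only [Prod.dist_eq, Real.dist_eq, sub_zero]
      have := abs_nonneg x
      have := abs_nonneg (y - A)
      have := abs_nonneg h
      refine max_le (by linarith) (max_le (by linarith) (by linarith))
    rw [Real.dist_eq] at h1
    have h3 : 1 + A * Φ (x, y, h) = A * (Φ (x, y, h) - Φ (0, A, 0)) := by linarith
    rw [h3, abs_mul, abs_mul, abs_mul, abs_two]
    have hL0 : (0:ℝ) ≤ L := L.2
    calc 2 * |x| * (|A| * |Φ (x, y, h) - Φ (0, A, 0)|)
        ≤ 2 * |x| * (|A| * (L * (|x| + |y - A| + |h|))) := by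
          gcongr; exact h1.trans (by gcongr)
      _ = 2 * |A| * L * (|x| * (|x| + |y - A| + |h|)) := by ring
      _ ≤ 2 * |A| * L * (2 * ((x ^ 2 + (y - A) ^ 2) + h ^ 2)) := by
          refine mul_le_mul_of_nonneg_left ?_ (by positivity)
          rw [← sq_abs x, ← sq_abs (y - A), ← sq_abs h]
          nlinarith [sq_nonneg (|x| - |y - A|), sq_nonneg (|x| - |h|), sq_nonneg (|y - A|),
            sq_nonneg (|h|)]
      _ = _ := by ring
  set C : ℝ := 4 * |A| * L with hCdef
  have hC : 0 ≤ C := by positivity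
  set r := min (ρ ^ 2) (δ ^ 2) / 2 with hr
  have hr0 : 0 < r := by positivity
  have dist_of : ∀ e > 0, r < e ^ 2 → ∀ x y h : ℝ, 0 < h → h < e → x ^ 2 + (y - A) ^ 2 ≤ r →
      dist ((x, y, h) : ℝ × ℝ × ℝ) (0, A, 0) < e := by
    intro e he hre x y h h0 hhe hx
    simp only [Prod.dist_eq, Real.dist_eq, sub_zero]
    refine max_lt (abs_lt_of_sq_lt_sq ?_ he.le) (max_lt (abs_lt_of_sq_lt_sq ?_ he.le) ?_)
    · nlinarith [sq_nonneg (y - A)]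
    · nlinarith [sq_nonneg x]
    · rwa [abs_of_pos h0]
  have hrρ : r < ρ ^ 2 := by
    have := min_le_left (ρ ^ 2) (δ ^ 2)
    have : 0 < ρ ^ 2 := by positivity
    linarith
  have hrδ : r < δ ^ 2 := by
    have := min_le_right (ρ ^ 2) (δ ^ 2)
    have : 0 < δ ^ 2 := by positivity
    linarith
  have hlim : Tendsto (fun h : ℝ => h ^ 2 * Real.exp ((2 * C + 1) * T)) (𝓝[>] 0) (𝓝 0) := by
    have : Continuous (fun h : ℝ => h ^ 2 * Real.exp ((2 * C + 1) * T)) := by fun_prop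
    have h2 := this.tendsto 0
    simp only [ne_eq, OfNat.ofNat_ne_zero, not_false_eq_true, zero_pow, zero_mul] at h2
    exact h2.mono_left nhdsWithin_le_nhds
  have hlt : ∀ e : ℝ, 0 < e → ∀ᶠ h in 𝓝[>] (0:ℝ), h < e := fun e he =>
    nhdsWithin_le_nhds (Iio_mem_nhds he)
  filter_upwards [hlim.eventually (Iio_mem_nhds hr0), self_mem_nhdsWithin, hlt ρ hρ, hlt δ hδ,
    hlt 1 one_pos] with h h1 h2 h3 h4 h5 s hs
  have h2 : 0 < h := h2
  have h1 : h ^ 2 * Real.exp ((2 * C + 1) * T) < r := h1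
  have hh : h ∈ Set.Ioc (0:ℝ) 1 := ⟨h2, h5.le⟩
  apply dist_of δ hδ hrδ _ _ _ h2 h4
  refine le_trans ?_ h1.le
  set E : ℝ → ℝ := fun s => τ h s ^ 2 + (ν h s - A) ^ 2 with hEdef
  have hE0 : E 0 = 0 := by simp [hEdef, hinit h hh]
  have hE : ∀ s, HasDerivAt E (2 * τ h s * (1 + A * Φ (τ h s, ν h s, h))) s := by
    intro s
    have := ((hτ h hh s).pow 2).add (((hν h hh s).sub_const A).pow 2)
    refine this.congr_deriv ?_
    simp; ring
  have hEb : ∀ s, E s ≤ r → |2 * τ h s * (1 + A * Φ (τ h s, ν h s, h))| ≤ C * (E s + h ^ 2) :=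
    fun s hs => key _ _ _ (dist_of ρ hρ hrρ _ _ _ h2 h3 hs)
  rcases le_total 0 s with h0 | h0
  · exact growth_aux E _ C h r T hC h2 hE hE0 (fun s hs => (le_abs_self _).trans (hEb s hs)) h1.le
      s ⟨h0, (le_abs_self s).trans hs⟩
  · have := growth_aux (fun s => E (-s)) (fun s => -(2 * τ h (-s) *
        (1 + A * Φ (τ h (-s), ν h (-s), h)))) C h r T hC h2
      (fun s => by
        have h7 := (hE (-s)).comp s (hasDerivAt_neg s)
        exact h7.congr_deriv (by ring)) (by simpa using hE0)
      (fun s hs => (neg_le_abs _).trans (hEb (-s) hs)) h1.le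
      (-s) ⟨by linarith, (neg_le_abs s).trans hs⟩
    simpa using this

/-- Theorem 4.3. Let `Φ` be smooth on `ℝ³ ∖ {0}`, `A ≠ 0`, and for each
`h ∈ (0,1]` let `(τ_h, ν_h)` solve `τ_h' = 1 + ν_h·Φ(τ_h, ν_h, h)`,
`ν_h' = −τ_h·Φ(τ_h, ν_h, h)` with `τ_h(0) = 0`, `ν_h(0) = A`; assume the constant function
`(0, A)` solves the system for `h = 0`, i.e. `1 + A·Φ(0, A, 0) = 0`. Then as `h → 0⁺`,
`(τ_h, ν_h)` converges to the constant solution `(0, A)` in the `Cᵏ` sense, uniformly on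
compact subsets of `ℝ`, for every `k`. -/
theorem tau_nu_converge_Ck_to_constant_solution
    (Φ : ℝ × ℝ × ℝ → ℝ)
    (hΦ : ContDiffOn ℝ (⊤ : ℕ∞) Φ {p : ℝ × ℝ × ℝ | p ≠ (0, 0, 0)})
    (A : ℝ) (hA : A ≠ 0)
    (τ ν : ℝ → ℝ → ℝ)
    (hτ : ∀ h ∈ Set.Ioc (0:ℝ) 1, ∀ s : ℝ,
      HasDerivAt (τ h) (1 + ν h s * Φ (τ h s, ν h s, h)) s)
    (hν : ∀ h ∈ Set.Ioc (0:ℝ) 1, ∀ s : ℝ,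
      HasDerivAt (ν h) (-(τ h s) * Φ (τ h s, ν h s, h)) s)
    (hinit : ∀ h ∈ Set.Ioc (0:ℝ) 1, τ h 0 = 0 ∧ ν h 0 = A)
    (hconst : 1 + A * Φ (0, A, 0) = 0) :
    ∀ k : ℕ, ∀ K : Set ℝ, IsCompact K → ∀ ε > 0, ∀ᶠ h in 𝓝[>] (0:ℝ), ∀ s ∈ K,
      |iteratedDeriv k (τ h) s - iteratedDeriv k (fun _ => (0:ℝ)) s| < ε ∧
      |iteratedDeriv k (ν h) s - iteratedDeriv k (fun _ => A) s| < ε := by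
  have hU : IsOpen {p : ℝ × ℝ × ℝ | p ≠ (0, 0, 0)} := isOpen_ne
  intro k K hK ε hε
  obtain ⟨T, hT⟩ := hK.isBounded.exists_norm_le
  have main : ∀ G : ℝ × ℝ × ℝ → ℝ,
      ContDiffOn ℝ (⊤ : ℕ∞) G {p : ℝ × ℝ × ℝ | p ≠ (0, 0, 0)} →
      ∀ᶠ h in 𝓝[>] (0:ℝ), ∀ s ∈ K, |iteratedDeriv k (fun s => G (τ h s, ν h s, h)) s -
        iteratedDeriv k (fun _ => G (0, A, 0)) s| < ε := by
    intro G hG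
    obtain ⟨H, hH, hH0, hHs⟩ := iter_aux Φ hΦ A τ ν hτ hν hconst k G hG
    have hc : ContinuousAt H (0, A, 0) :=
      (hH.contDiffAt (hU.mem_nhds (by simp [hA]))).continuousAt
    obtain ⟨δ, hδ, hd⟩ := Metric.continuousAt_iff.1 hc ε hε
    filter_upwards [c0_aux Φ hΦ A hA τ ν hτ hν hinit hconst T δ hδ, self_mem_nhdsWithin,
      nhdsWithin_le_nhds (Iio_mem_nhds one_pos)] with h h1 h2 h3 s hs
    rw [hHs h ⟨h2, le_of_lt h3⟩ s, iteratedDeriv_const, ← hH0, ← Real.dist_eq]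
    exact hd (h1 s (hT s hs))
  filter_upwards [main (fun p => p.1) contDiff_fst.contDiffOn,
    main (fun p => p.2.1) contDiff_snd.fst.contDiffOn] with h h1 h2 s hs
  exact ⟨h1 s hs, h2 s hs⟩
end

section
/- As h → 0⁺, the curves X_h converge, uniformly together with all their derivatives on compact subsets of ℝ, to the circle s ↦ iA·e^{−is/A + iθ₀}: for each nonnegative integer k and compact interval K ⊂ ℝ, sup_{s ∈ K} |X_h^{(k)}(s) − (d^k/ds^k)(iA e^{−is/A + iθ₀})| → 0 as h → 0⁺. -/
open Filter Topology

lemma gcc_oneside (V : ℝ × ℝ × ℝ → ℝ × ℝ) (A : ℝ) (L r : ℝ) (hL : 0 ≤ L)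
    (hV : ∀ p : ℝ × ℝ × ℝ, dist p (0, A, 0) < r → ‖V p‖ ≤ L * dist p (0, A, 0))
    (S h : ℝ) (hh : 0 < h) (hS : h * Real.exp ((L + 1) * S) < r)
    (f : ℝ → ℝ × ℝ) (f' : ℝ → ℝ × ℝ) (hf : ∀ s, HasDerivAt f (f' s) s)
    (hf' : ∀ s, ‖f' s‖ ≤ ‖V ((f s).1, (f s).2, h)‖) (h0 : f 0 = (0, A)) :
    ∀ s ∈ Set.Icc 0 S, ‖f s - (0, A)‖ ≤ h * Real.exp ((L + 1) * s) := by
  have hB : ∀ x : ℝ, HasDerivAt (fun s => h * Real.exp ((L + 1) * s))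
      (h * (Real.exp ((L + 1) * x) * ((L + 1) * 1))) x := fun x =>
    (((hasDerivAt_id x).const_mul (L + 1)).exp).const_mul h
  have key := image_norm_le_of_norm_deriv_right_lt_deriv_boundary
    (f := fun s => f s - (0, A)) (f' := f') (a := 0) (b := S)
    (fun s _ => ((hf s).sub_const _).continuousAt.continuousWithinAt)
    (fun s _ => ((hf s).sub_const _).hasDerivWithinAt)
    (B := fun s => h * Real.exp ((L + 1) * s))
    (B' := fun x => h * (Real.exp ((L + 1) * x) * ((L + 1) * 1)))
    (by simp [h0, hh.le]) hB ?_
  · intro s hs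
    exact key hs
  · intro x hx heq
    have hx' : ‖f x - (0, A)‖ = h * Real.exp ((L + 1) * x) := heq
    have h1 : (1:ℝ) ≤ Real.exp ((L + 1) * x) := Real.one_le_exp (by nlinarith [hx.1])
    have hpos : 0 < h * Real.exp ((L + 1) * x) := by positivity
    have hd : dist (((f x).1, (f x).2, h) : ℝ × ℝ × ℝ) (0, A, 0) ≤ h * Real.exp ((L + 1) * x) := by
      have e1 : dist (f x) (0, A) = h * Real.exp ((L + 1) * x) := by rw [dist_eq_norm, hx']
      rw [Prod.dist_eq] at e1
      have e2 := (max_le_iff.1 e1.le)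
      rw [Prod.dist_eq, Prod.dist_eq]
      refine max_le e2.1 (max_le e2.2 ?_)
      simp only [dist_zero_right, Real.norm_eq_abs, abs_of_pos hh]
      nlinarith
    have hlt : h * Real.exp ((L + 1) * x) < r := by
      refine lt_of_le_of_lt ?_ hS
      gcongr
      exact hx.2.le
    have := hV _ (lt_of_le_of_lt hd hlt)
    have h3 := hf' x
    have h4 := mul_le_mul_of_nonneg_left hd hL
    show ‖f' x‖ < h * (Real.exp ((L + 1) * x) * ((L + 1) * 1))
    nlinarith

lemma gcc_smooth_bound (V : ℝ × ℝ × ℝ → ℝ × ℝ) (p0 : ℝ × ℝ × ℝ) (hV : ContDiffAt ℝ 1 V p0)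
    (h0 : V p0 = 0) : ∃ L r : ℝ, 0 ≤ L ∧ 0 < r ∧
      ∀ p : ℝ × ℝ × ℝ, dist p p0 < r → ‖V p‖ ≤ L * dist p p0 := by
  obtain ⟨K, t, ht, hK⟩ := hV.exists_lipschitzOnWith
  obtain ⟨r, hr, hrt⟩ := Metric.mem_nhds_iff.1 ht
  refine ⟨K, r, K.2, hr, fun p hp => ?_⟩
  have := hK.dist_le_mul p (hrt hp) p0 (mem_of_mem_nhds ht)
  rwa [h0, dist_zero_right] at this

/-- uniform convergence of the state -/
lemma gcc_state (Φ : ℝ × ℝ × ℝ → ℝ)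
    (hΦ : ContDiffOn ℝ (⊤ : ℕ∞) Φ {p : ℝ × ℝ × ℝ | p ≠ (0, 0, 0)})
    (A : ℝ) (hA : A ≠ 0)
    (τ ν : ℝ → ℝ → ℝ)
    (hτ : ∀ h ∈ Set.Ioc (0:ℝ) 1, ∀ s : ℝ,
      HasDerivAt (τ h) (1 + ν h s * Φ (τ h s, ν h s, h)) s)
    (hν : ∀ h ∈ Set.Ioc (0:ℝ) 1, ∀ s : ℝ,
      HasDerivAt (ν h) (-(τ h s) * Φ (τ h s, ν h s, h)) s)
    (hinit : ∀ h ∈ Set.Ioc (0:ℝ) 1, τ h 0 = 0 ∧ ν h 0 = A)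
    (hconst : 1 + A * Φ (0, A, 0) = 0) (S : ℝ) :
    Tendsto (fun q : ℝ × ℝ => ((τ q.1 q.2, ν q.1 q.2, q.1) : ℝ × ℝ × ℝ))
      (𝓝[>] (0:ℝ) ×ˢ 𝓟 (Set.Icc (-S) S)) (𝓝 (0, A, 0)) := by
  have hopen : IsOpen {p : ℝ × ℝ × ℝ | p ≠ (0, 0, 0)} := isOpen_ne
  have hp0 : ((0, A, 0) : ℝ × ℝ × ℝ) ∈ {p : ℝ × ℝ × ℝ | p ≠ (0, 0, 0)} := by simp [hA]
  set V : ℝ × ℝ × ℝ → ℝ × ℝ := fun p => (1 + p.2.1 * Φ p, -p.1 * Φ p) with hVdef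
  have hΦat : ContDiffAt ℝ 1 Φ (0, A, 0) :=
    (hΦ.contDiffAt (hopen.mem_nhds hp0)).of_le (by exact_mod_cast le_top)
  have hV : ContDiffAt ℝ 1 V (0, A, 0) := by
    refine ContDiffAt.prodMk ?_ ?_
    · exact contDiffAt_const.add ((contDiffAt_fst.comp _ contDiffAt_snd).mul hΦat)
    · exact contDiffAt_fst.neg.mul hΦat
  obtain ⟨L, r, hL, hr, hLr⟩ := gcc_smooth_bound V (0, A, 0) hV (by simp [hVdef, hconst])
  have hE : Tendsto (fun h : ℝ => h * Real.exp ((L + 1) * S)) (𝓝[>] (0:ℝ)) (𝓝 0) := by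
    have : Tendsto (fun h : ℝ => h * Real.exp ((L + 1) * S)) (𝓝 (0:ℝ))
        (𝓝 (0 * Real.exp ((L + 1) * S))) := tendsto_id.mul_const _
    rw [zero_mul] at this
    exact this.mono_left nhdsWithin_le_nhds
  have hI : ∀ᶠ h in 𝓝[>] (0:ℝ), h ∈ Set.Ioc (0:ℝ) 1 := Ioc_mem_nhdsGT one_pos
  have hid : Tendsto (fun h : ℝ => h) (𝓝[>] (0:ℝ)) (𝓝 0) := nhdsWithin_le_nhds
  rw [Metric.tendsto_nhds]
  intro ε hε
  rw [eventually_prod_principal_iff]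
  filter_upwards [hI, hE.eventually_lt_const hr, hE.eventually_lt_const hε,
    hid.eventually_lt_const hε] with h hh h1 h2 h3
  intro s hs
  have hf : ∀ s, HasDerivAt (fun s => (τ h s, ν h s)) (V (τ h s, ν h s, h)) s := fun s =>
    (hτ h hh s).prodMk (hν h hh s)
  have hg : ∀ s, HasDerivAt (fun s => (τ h (-s), ν h (-s))) (-V (τ h (-s), ν h (-s), h)) s := by
    intro s
    have := (hf (-s)).scomp s (hasDerivAt_neg s)
    rw [neg_one_smul] at this
    exact this
  have hb : ‖((τ h s, ν h s) : ℝ × ℝ) - (0, A)‖ ≤ h * Real.exp ((L + 1) * S) := by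
    rcases le_total 0 s with h0 | h0
    · refine (gcc_oneside V A L r hL hLr S h hh.1 h1 _ _ hf (fun s => le_rfl)
        (by simp [hinit h hh]) s ⟨h0, hs.2⟩).trans ?_
      have := hh.1.le
      gcongr
      exact hs.2
    · have := (gcc_oneside V A L r hL hLr S h hh.1 h1 _ _ hg (fun s => (norm_neg _).le)
        (by simp [hinit h hh]) (-s) ⟨by linarith, by linarith [hs.1]⟩)
      simp only [neg_neg] at this
      refine this.trans ?_
      have := hh.1.le
      gcongr
      linarith [hs.1]
  have hb' := lt_of_le_of_lt hb h2
  rw [← dist_eq_norm, Prod.dist_eq, max_lt_iff] at hb'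
  rw [Prod.dist_eq, Prod.dist_eq]
  refine max_lt hb'.1 (max_lt hb'.2 ?_)
  simpa [abs_of_pos hh.1] using h3

/-- the derivatives of the generating curve -/
lemma gcc_deriv (Φ : ℝ × ℝ × ℝ → ℝ)
    (hΦ : ContDiffOn ℝ (⊤ : ℕ∞) Φ {p : ℝ × ℝ × ℝ | p ≠ (0, 0, 0)})
    (A : ℝ) (hA : A ≠ 0) (hconst : 1 + A * Φ (0, A, 0) = 0) (k : ℕ) :
    ∃ G : ℝ × ℝ × ℝ → ℂ, ContDiffOn ℝ (⊤ : ℕ∞) G {p : ℝ × ℝ × ℝ | p ≠ (0, 0, 0)} ∧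
      G (0, A, 0) = (-Complex.I / A) ^ k * (Complex.I * A) ∧
      ∀ (τ ν θ : ℝ → ℝ) (h : ℝ), 0 < h →
        (∀ s, HasDerivAt τ (1 + ν s * Φ (τ s, ν s, h)) s) →
        (∀ s, HasDerivAt ν (-(τ s) * Φ (τ s, ν s, h)) s) →
        (∀ s, HasDerivAt θ (Φ (τ s, ν s, h)) s) →
        iteratedDeriv k (fun s => ((τ s : ℂ) + (ν s : ℂ) * Complex.I) *
          Complex.exp (Complex.I * (θ s : ℂ))) =
        fun s => G (τ s, ν s, h) * Complex.exp (Complex.I * (θ s : ℂ)) := by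
  have hopen : IsOpen {p : ℝ × ℝ × ℝ | p ≠ (0, 0, 0)} := isOpen_ne
  have hof : ContDiff ℝ (⊤ : ℕ∞) (fun x : ℝ => (x : ℂ)) := Complex.ofRealCLM.contDiff
  have hA' : (A : ℂ) ≠ 0 := by exact_mod_cast hA
  have hΦ0 : Φ (0, A, 0) = -1 / A := by field_simp; linarith
  induction k with
  | zero =>
    refine ⟨fun p => (p.1 : ℂ) + (p.2.1 : ℂ) * Complex.I, ?_, ?_, ?_⟩
    · have h1 : ContDiff ℝ (⊤ : ℕ∞) (fun p : ℝ × ℝ × ℝ => (p.1 : ℂ)) := hof.comp contDiff_fst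
      have h2 : ContDiff ℝ (⊤ : ℕ∞) (fun p : ℝ × ℝ × ℝ => (p.2.1 : ℂ)) :=
        hof.comp (contDiff_fst.comp contDiff_snd)
      exact (h1.add (h2.mul contDiff_const)).contDiffOn
    · simp [mul_comm]
    · intros; rw [iteratedDeriv_zero]
  | succ k ih =>
    obtain ⟨G, hG, hG0, hGd⟩ := ih
    refine ⟨fun p => fderiv ℝ G p (1 + p.2.1 * Φ p, -p.1 * Φ p, 0) +
      G p * (Complex.I * (Φ p : ℂ)), ?_, ?_, ?_⟩
    · refine ContDiffOn.add ?_ (hG.mul (contDiffOn_const.mul (hof.comp_contDiffOn hΦ)))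
      refine ContDiffOn.clm_apply (hG.fderiv_of_isOpen hopen (by simp)) ?_
      refine ContDiffOn.prodMk ?_ (ContDiffOn.prodMk ?_ contDiffOn_const)
      · exact contDiffOn_const.add ((contDiff_fst.comp contDiff_snd).contDiffOn.mul hΦ)
      · exact contDiff_fst.neg.contDiffOn.mul hΦ
    · have hz : ((1 + A * Φ (0, A, 0), -0 * Φ (0, A, 0), 0) : ℝ × ℝ × ℝ) = 0 := by
        simp [hconst]
      show fderiv ℝ G (0, A, 0) (1 + A * Φ (0, A, 0), -0 * Φ (0, A, 0), 0) + _ = _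
      rw [hz, map_zero, hG0, hΦ0]
      push_cast
      ring
    · intro τ ν θ h hh hτ hν hθ
      rw [iteratedDeriv_succ, hGd τ ν θ h hh hτ hν hθ]
      funext s
      have hne : ((τ s, ν s, h) : ℝ × ℝ × ℝ) ∈ {p : ℝ × ℝ × ℝ | p ≠ (0, 0, 0)} := by
        simp [hh.ne']
      have hGat : HasFDerivAt G (fderiv ℝ G (τ s, ν s, h)) (τ s, ν s, h) :=
        ((hG.contDiffAt (hopen.mem_nhds hne)).differentiableAt (by simp)).hasFDerivAt
      have hc : HasDerivAt (fun s => ((τ s, ν s, h) : ℝ × ℝ × ℝ))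
          (1 + ν s * Φ (τ s, ν s, h), -(τ s) * Φ (τ s, ν s, h), 0) s :=
        (hτ s).prodMk ((hν s).prodMk (hasDerivAt_const s h))
      have h1 := hGat.comp_hasDerivAt s hc
      have h2 : HasDerivAt (fun s => Complex.exp (Complex.I * (θ s : ℂ)))
          (Complex.exp (Complex.I * (θ s : ℂ)) * (Complex.I * (Φ (τ s, ν s, h) : ℂ))) s :=
        ((hθ s).ofReal_comp.const_mul Complex.I).cexp
      refine (h1.mul h2).deriv.trans ?_
      simp only [Function.comp]
      ring

lemma gcc_circle (A : ℝ) (θ₀ : ℝ) (k : ℕ) :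
    iteratedDeriv k (fun t : ℝ =>
          Complex.I * (A : ℂ) * Complex.exp (-Complex.I * (t : ℂ) / (A : ℂ)
            + Complex.I * (θ₀ : ℂ))) =
    fun t : ℝ => (-Complex.I / A) ^ k * (Complex.I * A) *
      Complex.exp (-Complex.I * (t : ℂ) / (A : ℂ) + Complex.I * (θ₀ : ℂ)) := by
  induction k with
  | zero => rw [iteratedDeriv_zero]; simp
  | succ k ih =>
    rw [iteratedDeriv_succ, ih]
    funext t
    have h1 : HasDerivAt (fun t : ℝ => -Complex.I * (t : ℂ) / (A : ℂ) + Complex.I * (θ₀ : ℂ))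
        (-Complex.I * ((1:ℝ):ℂ) / A) t :=
      ((((hasDerivAt_id t).ofReal_comp).const_mul (-Complex.I)).div_const (A:ℂ)).add_const _
    refine (h1.cexp.const_mul _).deriv.trans ?_
    push_cast
    ring

/-- Corollary of Theorem 4.3. With the generating curves
`X_h(s) = (τ_h(s) + iν_h(s))·e^{iθ_h(s)}`, `θ_h(s) = θ₀ + ∫₀ˢ Φ(τ_h, ν_h, h)`, as `h → 0⁺`
the curves `X_h` converge, uniformly with all derivatives on compact subsets of `ℝ`, to the
circle `s ↦ iA·e^{−is/A + iθ₀}`. -/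
theorem generating_curves_converge_to_circle
    (Φ : ℝ × ℝ × ℝ → ℝ)
    (hΦ : ContDiffOn ℝ (⊤ : ℕ∞) Φ {p : ℝ × ℝ × ℝ | p ≠ (0, 0, 0)})
    (A : ℝ) (hA : A ≠ 0) (θ₀ : ℝ)
    (τ ν : ℝ → ℝ → ℝ)
    (hτ : ∀ h ∈ Set.Ioc (0:ℝ) 1, ∀ s : ℝ,
      HasDerivAt (τ h) (1 + ν h s * Φ (τ h s, ν h s, h)) s)
    (hν : ∀ h ∈ Set.Ioc (0:ℝ) 1, ∀ s : ℝ,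
      HasDerivAt (ν h) (-(τ h s) * Φ (τ h s, ν h s, h)) s)
    (hinit : ∀ h ∈ Set.Ioc (0:ℝ) 1, τ h 0 = 0 ∧ ν h 0 = A)
    (hconst : 1 + A * Φ (0, A, 0) = 0)
    (X : ℝ → ℝ → ℂ)
    (hX : ∀ h ∈ Set.Ioc (0:ℝ) 1, ∀ s : ℝ,
      X h s = ((τ h s : ℂ) + (ν h s : ℂ) * Complex.I) *
        Complex.exp (Complex.I * ((θ₀ : ℂ) + ((∫ t in (0:ℝ)..s, Φ (τ h t, ν h t, h)) : ℝ)))) :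
    ∀ k : ℕ, ∀ K : Set ℝ, IsCompact K → ∀ ε > 0, ∀ᶠ h in 𝓝[>] (0:ℝ), ∀ s ∈ K,
      ‖iteratedDeriv k (X h) s -
        iteratedDeriv k (fun t : ℝ =>
          Complex.I * (A : ℂ) * Complex.exp (-Complex.I * (t : ℂ) / (A : ℂ)
            + Complex.I * (θ₀ : ℂ))) s‖ < ε := by
  intro k K hK ε hε
  have hopen : IsOpen {p : ℝ × ℝ × ℝ | p ≠ (0, 0, 0)} := isOpen_ne
  have hp0 : ((0, A, 0) : ℝ × ℝ × ℝ) ∈ {p : ℝ × ℝ × ℝ | p ≠ (0, 0, 0)} := by simp [hA]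
  have hΦ0 : Φ (0, A, 0) = -1 / A := by field_simp; linarith
  obtain ⟨S, hS⟩ : ∃ S : ℝ, K ⊆ Set.Icc (-S) S := by
    obtain ⟨S, hS⟩ := hK.isBounded.subset_closedBall 0
    refine ⟨S, hS.trans ?_⟩
    rw [Real.closedBall_eq_Icc]
    simp
  obtain ⟨G, hG, hG0, hGd⟩ := gcc_deriv Φ hΦ A hA hconst k
  have hst := gcc_state Φ hΦ A hA τ ν hτ hν hinit hconst S
  set F : Filter (ℝ × ℝ) := 𝓝[>] (0:ℝ) ×ˢ 𝓟 (Set.Icc (-S) S) with hF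
  have hI : ∀ᶠ h in 𝓝[>] (0:ℝ), h ∈ Set.Ioc (0:ℝ) 1 := Ioc_mem_nhdsGT one_pos
  have hcont : ∀ h ∈ Set.Ioc (0:ℝ) 1, Continuous (fun t => Φ (τ h t, ν h t, h)) := by
    intro h hh
    refine hΦ.continuousOn.comp_continuous (f := fun t => (τ h t, ν h t, h)) ?_ ?_
    · have h1 : Continuous (τ h) :=
        continuous_iff_continuousAt.2 fun s => (hτ h hh s).continuousAt
      have h2 : Continuous (ν h) :=
        continuous_iff_continuousAt.2 fun s => (hν h hh s).continuousAt
      fun_prop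
    · intro t
      simp [hh.1.ne']
  have hΦt : Tendsto (fun q : ℝ × ℝ => Φ (τ q.1 q.2, ν q.1 q.2, q.1)) F (𝓝 (-1 / A)) := by
    rw [← hΦ0]
    exact ((hΦ.continuousOn.continuousAt (hopen.mem_nhds hp0)).tendsto).comp hst
  have hGt : Tendsto (fun q : ℝ × ℝ => G (τ q.1 q.2, ν q.1 q.2, q.1)) F
      (𝓝 ((-Complex.I / A) ^ k * (Complex.I * A))) := by
    rw [← hG0]
    exact ((hG.continuousOn.continuousAt (hopen.mem_nhds hp0)).tendsto).comp hst
  -- the angle error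
  have hang : Tendsto (fun q : ℝ × ℝ => (∫ t in (0:ℝ)..q.2, Φ (τ q.1 t, ν q.1 t, q.1)) + q.2 / A)
      F (𝓝 0) := by
    rw [Metric.tendsto_nhds]
    intro η hη
    have hη' : 0 < η / (|S| + 1) := by positivity
    have h1 := Metric.tendsto_nhds.1 hΦt _ hη'
    rw [hF, eventually_prod_principal_iff] at h1 ⊢
    filter_upwards [h1, hI] with h h2 hh s hs
    have hint : (∫ t in (0:ℝ)..s, Φ (τ h t, ν h t, h)) + s / A
        = ∫ t in (0:ℝ)..s, (Φ (τ h t, ν h t, h) - (-1 / A)) := by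
      rw [intervalIntegral.integral_sub ((hcont h hh).intervalIntegrable _ _) (by simp)]
      simp
      ring
    show dist ((∫ t in (0:ℝ)..s, Φ (τ h t, ν h t, h)) + s / A) 0 < η
    rw [hint, dist_zero_right]
    have hsS : |s| ≤ |S| := (abs_le.2 hs).trans (le_abs_self S)
    have hb := intervalIntegral.norm_integral_le_of_norm_le_const (a := 0) (b := s)
      (f := fun t => Φ (τ h t, ν h t, h) - (-1 / A)) (C := η / (|S| + 1)) (by
        intro t ht
        have ht' : t ∈ Set.Icc (-S) S := by
          have := Set.uIoc_subset_uIcc ht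
          refine (Set.uIcc_subset_Icc ?_ hs) this
          constructor <;> linarith [hs.1, hs.2]
        have := h2 t ht'
        rw [dist_eq_norm] at this
        exact this.le)
    refine lt_of_le_of_lt hb ?_
    rw [sub_zero, div_mul_eq_mul_div, div_lt_iff₀ (by positivity)]
    nlinarith
  have hexp : Tendsto (fun q : ℝ × ℝ => Complex.exp (Complex.I *
      (((∫ t in (0:ℝ)..q.2, Φ (τ q.1 t, ν q.1 t, q.1)) + q.2 / A : ℝ) : ℂ))) F (𝓝 1) := by
    have hc : Continuous (fun x : ℝ => Complex.exp (Complex.I * (x : ℂ))) := by fun_prop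
    have := (hc.tendsto 0).comp hang
    simpa [Function.comp_def] using this
  have hfin : Tendsto (fun q : ℝ × ℝ => ‖G (τ q.1 q.2, ν q.1 q.2, q.1) * Complex.exp (Complex.I *
      (((∫ t in (0:ℝ)..q.2, Φ (τ q.1 t, ν q.1 t, q.1)) + q.2 / A : ℝ) : ℂ)) -
        (-Complex.I / A) ^ k * (Complex.I * A)‖) F (𝓝 0) := by
    have := ((hGt.mul hexp).sub_const ((-Complex.I / A) ^ k * (Complex.I * A))).norm
    simpa using this
  have hev := hfin.eventually_lt_const hε
  rw [hF, eventually_prod_principal_iff] at hev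
  filter_upwards [hev, hI] with h h1 hh s hs
  have h2 := h1 s (hS hs)
  have hθ : ∀ s, HasDerivAt (fun s => θ₀ + ∫ t in (0:ℝ)..s, Φ (τ h t, ν h t, h))
      (Φ (τ h s, ν h s, h)) s := fun s =>
    (intervalIntegral.integral_hasDerivAt_right ((hcont h hh).intervalIntegrable _ _)
      ((hcont h hh).stronglyMeasurableAtFilter _ _) (hcont h hh).continuousAt).const_add θ₀
  have hXe : X h = fun s => ((τ h s : ℂ) + (ν h s : ℂ) * Complex.I) *
      Complex.exp (Complex.I * ((θ₀ + ∫ t in (0:ℝ)..s, Φ (τ h t, ν h t, h) : ℝ) : ℂ)) := by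
    funext s
    rw [hX h hh s, Complex.ofReal_add]
  rw [hXe, hGd (τ h) (ν h) _ h hh.1 (hτ h hh) (hν h hh) hθ, gcc_circle]
  set w : ℝ := θ₀ - s / A with hw
  have e1 : -Complex.I * (s : ℂ) / (A : ℂ) + Complex.I * (θ₀ : ℂ) = (w : ℂ) * Complex.I := by
    rw [hw]; push_cast; ring
  have e2 : Complex.I * ((θ₀ + ∫ t in (0:ℝ)..s, Φ (τ h t, ν h t, h) : ℝ) : ℂ)
      = Complex.I * (((∫ t in (0:ℝ)..s, Φ (τ h t, ν h t, h)) + s / A : ℝ) : ℂ)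
        + (w : ℂ) * Complex.I := by
    rw [hw]; push_cast; ring
  simp only [e1, e2, Complex.exp_add]
  rw [← mul_assoc, ← sub_mul, norm_mul, Complex.norm_exp_ofReal_mul_I, mul_one]
  exact h2
end

section
/- Along any solution of the minimal-surface generating system, the quantity ν/√(τ² + h²) is constant: for all s, t in the interval of definition, ν(s)/√(τ(s)² + h²) = ν(t)/√(τ(t)² + h²). -/
/-- Section 5. Along any solution of the generating system of the
helicoidal minimal surfaces of pitch `h > 0`, namely
`τ' = (τ² + h²)/(τ² + ν² + h²)`, `ν' = τν/(τ² + ν² + h²)` on an interval `I`,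
the quantity `ν/√(τ² + h²)` is constant. -/
theorem minimal_first_integral
    (h : ℝ) (hh : 0 < h) (I : Set ℝ) (hI : I.OrdConnected) (τ ν : ℝ → ℝ)
    (hτ : ∀ s ∈ I, HasDerivWithinAt τ
      ((τ s ^ 2 + h ^ 2) / (τ s ^ 2 + ν s ^ 2 + h ^ 2)) I s)
    (hν : ∀ s ∈ I, HasDerivWithinAt ν
      (τ s * ν s / (τ s ^ 2 + ν s ^ 2 + h ^ 2)) I s) :
    ∀ s ∈ I, ∀ t ∈ I,
      ν s / Real.sqrt (τ s ^ 2 + h ^ 2) = ν t / Real.sqrt (τ t ^ 2 + h ^ 2) := by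
  have key : ∀ s ∈ I, HasDerivWithinAt (fun x => ν x / Real.sqrt (τ x ^ 2 + h ^ 2)) 0 I s := by
    intro s hs
    have hpos : 0 < τ s ^ 2 + h ^ 2 := by positivity
    have hD : τ s ^ 2 + ν s ^ 2 + h ^ 2 ≠ 0 := by positivity
    have hr : Real.sqrt (τ s ^ 2 + h ^ 2) ≠ 0 := (Real.sqrt_pos.mpr hpos).ne'
    have hsq : Real.sqrt (τ s ^ 2 + h ^ 2) ^ 2 = τ s ^ 2 + h ^ 2 := Real.sq_sqrt hpos.le
    have h1 := (((hτ s hs).pow 2).add_const (h ^ 2)).sqrt hpos.ne'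
    have h2 := (hν s hs).div h1 hr
    refine h2.congr_deriv ?_
    simp only [Pi.pow_apply]
    generalize Real.sqrt (τ s ^ 2 + h ^ 2) = r at *
    rw [← hsq]
    field_simp
    push_cast
    ring
  intro s hs t ht
  have hb := hI.convex.norm_image_sub_le_of_norm_hasDerivWithin_le (C := 0)
    key (fun x _ => by simp) ht hs
  rw [zero_mul] at hb
  exact sub_eq_zero.mp (norm_le_zero_iff.mp hb)
end

section
/- For every h > 0 and A ∈ ℝ, the functions τ(s) = h²s/(A² + h²) and ν(s) = (A/h)·√(τ(s)² + h²) defined on all of ℝ satisfy the system τ'(s) = (τ(s)² + h²)/(τ(s)² + ν(s)² + h²) and ν'(s) = τ(s)ν(s)/(τ(s)² + ν(s)² + h²) for all s ∈ ℝ. -/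
/-- Section 5, Wunderlich's solutions. For every `h > 0` and `A ∈ ℝ`,
the functions `τ(s) = h²s/(A² + h²)` and `ν(s) = (A/h)·√(τ(s)² + h²)` solve the generating
system of the helicoidal minimal surfaces of pitch `h` on all of `ℝ`:
`τ' = (τ² + h²)/(τ² + ν² + h²)` and `ν' = τν/(τ² + ν² + h²)`. -/
theorem wunderlich_solutions
    (h : ℝ) (hh : 0 < h) (A : ℝ)
    (τ ν : ℝ → ℝ)
    (hτdef : ∀ s : ℝ, τ s = h ^ 2 * s / (A ^ 2 + h ^ 2))
    (hνdef : ∀ s : ℝ, ν s = A / h * Real.sqrt (τ s ^ 2 + h ^ 2)) :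
    (∀ s : ℝ, HasDerivAt τ ((τ s ^ 2 + h ^ 2) / (τ s ^ 2 + ν s ^ 2 + h ^ 2)) s) ∧
    (∀ s : ℝ, HasDerivAt ν (τ s * ν s / (τ s ^ 2 + ν s ^ 2 + h ^ 2)) s) := by
  have hA : 0 < A ^ 2 + h ^ 2 := by positivity
  have hne : h ≠ 0 := hh.ne'
  have hq : ∀ s, 0 < τ s ^ 2 + h ^ 2 := fun s => by positivity
  have hsq : ∀ s, Real.sqrt (τ s ^ 2 + h ^ 2) ^ 2 = τ s ^ 2 + h ^ 2 :=
    fun s => Real.sq_sqrt (hq s).le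
  have hden : ∀ s, τ s ^ 2 + ν s ^ 2 + h ^ 2 = (τ s ^ 2 + h ^ 2) * (A ^ 2 + h ^ 2) / h ^ 2 := by
    intro s
    rw [hνdef s, mul_pow, hsq s]
    field_simp
    ring
  have hτ : ∀ s, HasDerivAt τ (h ^ 2 / (A ^ 2 + h ^ 2)) s := by
    intro s
    have e : τ = fun s => h ^ 2 * s / (A ^ 2 + h ^ 2) := funext hτdef
    rw [e]
    simpa using ((hasDerivAt_id s).const_mul (h ^ 2)).div_const (A ^ 2 + h ^ 2)
  refine ⟨fun s => ?_, fun s => ?_⟩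
  · have h1 := (hq s).ne'
    convert hτ s using 1
    rw [hden s]
    field_simp
  · have h1 := (hq s).ne'
    have h2 : Real.sqrt (τ s ^ 2 + h ^ 2) ≠ 0 := (Real.sqrt_pos.mpr (hq s)).ne'
    have e : ν = fun s => A / h * Real.sqrt (τ s ^ 2 + h ^ 2) := funext hνdef
    have hd := ((((hτ s).fun_pow 2).add_const (h ^ 2)).sqrt h1).const_mul (A / h)
    rw [hden s, hνdef s, e]
    refine hd.congr_deriv ?_
    have h3 := hsq s
    generalize Real.sqrt (τ s ^ 2 + h ^ 2) = r at *
    rw [← h3]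
    field_simp
    try norm_num
    try ring
end

section
/- Let h > 0 and suppose (τ, ν) : I → ℝ² is a continuously differentiable solution of the system τ' = ((τ² + h²)/(h(τ² + ν² + h²)))·(h + ν√(τ² + h²)), ν' = (hτν − τ(τ² + h²)^{3/2})/(h(τ² + ν² + h²)). Define x(s) = τ(s)·√(τ(s)² + ν(s)² + h²)/√(τ(s)² + h²) and y(s) = h·ν(s)/√(τ(s)² + h²). Then x and y satisfy x'(s) = (h/√(y(s)² + h²))·(y(s) + 1) and y'(s) = −h·x(s)/√(y(s)² + h²) for all s ∈ I. -/
/-- Section 6, linearizing change of variables. Let `h > 0` and let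
`(τ, ν)` solve the generating system of helicoidal surfaces of pitch `h` and constant mean
curvature `H = −1` on an interval `I`. Then the functions
`x = τ·√(τ² + ν² + h²)/√(τ² + h²)` and `y = hν/√(τ² + h²)` satisfy
`x' = (h/√(y² + h²))(y + 1)` and `y' = −hx/√(y² + h²)`. -/
theorem cmc_change_of_variables
    (h : ℝ) (hh : 0 < h) (I : Set ℝ) (τ ν : ℝ → ℝ)
    (hτ : ∀ s ∈ I, HasDerivWithinAt τ
      ((τ s ^ 2 + h ^ 2) / (h * (τ s ^ 2 + ν s ^ 2 + h ^ 2)) *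
        (h + ν s * Real.sqrt (τ s ^ 2 + h ^ 2))) I s)
    (hν : ∀ s ∈ I, HasDerivWithinAt ν
      ((h * τ s * ν s - τ s * Real.sqrt (τ s ^ 2 + h ^ 2) ^ 3) /
        (h * (τ s ^ 2 + ν s ^ 2 + h ^ 2))) I s)
    (x y : ℝ → ℝ)
    (hx : ∀ s : ℝ, x s = τ s * Real.sqrt (τ s ^ 2 + ν s ^ 2 + h ^ 2) /
      Real.sqrt (τ s ^ 2 + h ^ 2))
    (hy : ∀ s : ℝ, y s = h * ν s / Real.sqrt (τ s ^ 2 + h ^ 2)) :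
    ∀ s ∈ I,
      HasDerivWithinAt x (h / Real.sqrt (y s ^ 2 + h ^ 2) * (y s + 1)) I s ∧
      HasDerivWithinAt y (-(h * x s) / Real.sqrt (y s ^ 2 + h ^ 2)) I s := by
  intro s hs
  have h1 := hτ s hs
  have h2 := hν s hs
  have hPA : 0 < τ s ^ 2 + h ^ 2 := by positivity
  have hPB : 0 < τ s ^ 2 + ν s ^ 2 + h ^ 2 := by positivity
  have dA := ((h1.pow 2).add_const (h ^ 2)).sqrt hPA.ne'
  have dB := (((h1.pow 2).add (h2.pow 2)).add_const (h ^ 2)).sqrt hPB.ne'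
  have hA : 0 < Real.sqrt (τ s ^ 2 + h ^ 2) := Real.sqrt_pos.mpr hPA
  have hB : 0 < Real.sqrt (τ s ^ 2 + ν s ^ 2 + h ^ 2) := Real.sqrt_pos.mpr hPB
  have dx := (h1.mul dB).div dA hA.ne'
  have dy := (h2.const_mul h).div dA hA.ne'
  have ex : x = fun s => τ s * Real.sqrt (τ s ^ 2 + ν s ^ 2 + h ^ 2) /
      Real.sqrt (τ s ^ 2 + h ^ 2) := funext hx
  have ey : y = fun s => h * ν s / Real.sqrt (τ s ^ 2 + h ^ 2) := funext hy
  have sA := Real.sq_sqrt hPA.le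
  have sB := Real.sq_sqrt hPB.le
  have hr : Real.sqrt (y s ^ 2 + h ^ 2) = h * Real.sqrt (τ s ^ 2 + ν s ^ 2 + h ^ 2) /
      Real.sqrt (τ s ^ 2 + h ^ 2) := by
    rw [Real.sqrt_eq_iff_mul_self_eq (by positivity) (by positivity), ← sq, hy, div_pow, div_pow,
      mul_pow, mul_pow, sA, sB]
    field_simp
    ring
  rw [hr, hx s, hy s]
  constructor
  · rw [ex]
    refine dx.congr_deriv ?_
    simp only [Pi.pow_apply, Pi.add_apply, Pi.mul_apply]
    generalize Real.sqrt (τ s ^ 2 + h ^ 2) = A at *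
    generalize Real.sqrt (τ s ^ 2 + ν s ^ 2 + h ^ 2) = B at *
    generalize τ s = t at *
    generalize ν s = n at *
    have e1 : B ^ 2 = A ^ 2 + n ^ 2 := by linarith
    rw [← sB, ← sA]
    have k : (2 * t * (A ^ 2 / (h * B ^ 2) * (h + n * A)) +
      2 * n * ((h * t * n - t * A ^ 3) / (h * B ^ 2))) = 2 * t := by
      field_simp
      rw [e1]; ring
    have k2 : t ^ 2 = A ^ 2 - h ^ 2 := by linarith
    norm_num
    rw [k]
    field_simp
    ring_nf
    simp only [k2]
    ring
  · rw [ey]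
    refine dy.congr_deriv ?_
    simp only [Pi.pow_apply, Pi.add_apply, Pi.mul_apply]
    generalize Real.sqrt (τ s ^ 2 + h ^ 2) = A at *
    generalize Real.sqrt (τ s ^ 2 + ν s ^ 2 + h ^ 2) = B at *
    generalize τ s = t at *
    generalize ν s = n at *
    have e1 : B ^ 2 = A ^ 2 + n ^ 2 := by linarith
    rw [← sB, ← sA]
    norm_num
    field_simp
    rw [e1]
    ring
end

section
/- For every h > 0, Δφ(h, 1) = (2√(h² + 4)/h)·∫₀^{π/2} √(1 − (4/(h² + 4))·sin²θ) dθ; that is, Δφ(h, 1) equals (2√(h² + 4)/h)·E(2/√(h² + 4)), where E is the complete elliptic integral of the second kind. -/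
open Filter Topology intervalIntegral

/-- The change `Δφ(h, R)` of the polar angle of the generating curve of a constant mean
curvature (`H = −1`) helicoidal surface of pitch `h` over one full excursion between the
boundaries of the annulus `|R − 1| ≤ |X| ≤ R + 1`. -/
noncomputable def deltaPhi (h R : ℝ) : ℝ :=
  ∫ u in (-Real.pi)..Real.pi,
    Real.sqrt (R ^ 2 + 1 + 2 * R * Real.sin u + h ^ 2) * (1 + R * Real.sin u) /
      (h * (R ^ 2 + 1 + 2 * R * Real.sin u))

/-- Lemma 6.3. For every `h > 0`,
`Δφ(h, 1) = (2√(h² + 4)/h)·E(2/√(h² + 4))`, where `E` is the complete elliptic integral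
of the second kind, `E(k) = ∫₀^{π/2} √(1 − k² sin²θ) dθ`. -/
theorem deltaPhi_at_one (h : ℝ) (hh : 0 < h) :
    deltaPhi h 1 = 2 * Real.sqrt (h ^ 2 + 4) / h *
      ∫ θ in (0:ℝ)..(Real.pi / 2),
        Real.sqrt (1 - (2 / Real.sqrt (h ^ 2 + 4)) ^ 2 * Real.sin θ ^ 2) := by
  have hs : (0:ℝ) < h ^ 2 + 4 := by positivity
  set s := Real.sqrt (h ^ 2 + 4) with hsdef
  have hspos : 0 < s := Real.sqrt_pos.mpr hs
  have hssq : s ^ 2 = h ^ 2 + 4 := Real.sq_sqrt hs.le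
  set F : ℝ → ℝ := fun θ => Real.sqrt (1 - (2 / s) ^ 2 * Real.sin θ ^ 2) with hF
  have hFc : Continuous F := by rw [hF]; fun_prop
  have hFi : ∀ a b : ℝ, IntervalIntegrable F MeasureTheory.volume a b :=
    fun a b => hFc.intervalIntegrable a b
  have hper : Function.Periodic F Real.pi := by
    intro x
    simp only [hF, Real.sin_add_pi, neg_sq]
  have hae : ∀ᵐ u : ℝ, Real.sin u ≠ -1 := by
    have hc : (Set.range fun n : ℤ => -(Real.pi / 2) + n * (2 * Real.pi)).Countable :=
      Set.countable_range _
    filter_upwards [hc.ae_notMem MeasureTheory.volume] with u hu hsin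
    exact hu (Real.sin_eq_neg_one_iff.mp hsin)
  have h1 : deltaPhi h 1 =
      ∫ u in (-Real.pi)..Real.pi, s / (2 * h) * F (Real.pi / 4 - u / 2) := by
    unfold deltaPhi
    apply intervalIntegral.integral_congr_ae
    filter_upwards [hae] with u hu _
    have hne : 1 + Real.sin u ≠ 0 := fun h0 => hu (by linarith)
    have hsin : Real.sin (Real.pi / 4 - u / 2) ^ 2 = (1 - Real.sin u) / 2 := by
      rw [Real.sin_sq_eq_half_sub]
      have : 2 * (Real.pi / 4 - u / 2) = Real.pi / 2 - u := by ring
      rw [this, Real.cos_pi_div_two_sub]; ring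
    have hrt : Real.sqrt (1 ^ 2 + 1 + 2 * 1 * Real.sin u + h ^ 2)
        = s * F (Real.pi / 4 - u / 2) := by
      simp only [hF]
      rw [hsdef, ← Real.sqrt_mul hs.le, ← hsdef, hsin]
      congr 1
      rw [div_pow, hssq]
      field_simp
      ring
    rw [hrt]
    have hne2 : (1:ℝ) ^ 2 + 1 + 2 * 1 * Real.sin u = 2 * (1 + Real.sin u) := by ring
    rw [hne2, one_mul]
    field_simp
  have h2 : ∫ u in (-Real.pi)..Real.pi, F (Real.pi / 4 - u / 2)
      = 2 * ∫ θ in (0:ℝ)..Real.pi, F θ := by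
    rw [intervalIntegral.integral_comp_sub_div (fun x => F x) two_ne_zero, smul_eq_mul]
    congr 1
    have := hper.intervalIntegral_add_eq (Real.pi / 4 - Real.pi / 2) 0
    rw [zero_add] at this
    rw [← this]
    congr 1
    ring
  have h3 : ∫ θ in (Real.pi / 2)..Real.pi, F θ = ∫ θ in (0:ℝ)..(Real.pi / 2), F θ := by
    have := intervalIntegral.integral_comp_sub_left (a := 0) (b := Real.pi / 2) F Real.pi
    rw [sub_zero, sub_half] at this
    rw [← this]
    simp only [hF, Real.sin_pi_sub]
  rw [h1, intervalIntegral.integral_const_mul, h2,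
    ← intervalIntegral.integral_add_adjacent_intervals (hFi 0 (Real.pi / 2)) (hFi _ _), h3]
  field_simp
  ring
end

section
/- For every fixed h > 0, Δφ(h, R) tends to 0 as R → ∞. -/
open Filter Topology intervalIntegral

/-- Lemma 6.4. For every fixed `h > 0`, `Δφ(h, R) → 0` as `R → ∞`. -/
theorem deltaPhi_tendsto_zero (h : ℝ) (hh : 0 < h) :
    Tendsto (fun R => deltaPhi h R) atTop (𝓝 0) := by
  have hint : ∫ u in (-Real.pi)..Real.pi, Real.sin u / h = 0 := by
    simp
  rw [← hint]
  unfold deltaPhi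
  have hD : ∀ R : ℝ, 2 ≤ R → ∀ u : ℝ,
      (R - 1) ^ 2 ≤ R ^ 2 + 1 + 2 * R * Real.sin u ∧
      R ^ 2 + 1 + 2 * R * Real.sin u ≤ (R + 1) ^ 2 := by
    intro R hR u
    have h1 := Real.sin_le_one u
    have h2 := Real.neg_one_le_sin u
    constructor <;> nlinarith
  apply intervalIntegral.tendsto_integral_filter_of_dominated_convergence
    (fun _ => (3 + h) * 3 / h)
  · refine Eventually.of_forall fun R => Measurable.aestronglyMeasurable ?_
    fun_prop
  · filter_upwards [eventually_ge_atTop (2 : ℝ)] with R hR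
    refine Eventually.of_forall fun u _ => ?_
    obtain ⟨hl, hu⟩ := hD R hR u
    have h1 := Real.sin_le_one u
    have h2 := Real.neg_one_le_sin u
    set D := R ^ 2 + 1 + 2 * R * Real.sin u
    have hp : 0 < (R - 1) ^ 2 := by nlinarith
    have hDp : 0 < D := hp.trans_le hl
    rw [Real.norm_eq_abs, abs_div, abs_mul, abs_of_nonneg (Real.sqrt_nonneg _),
      abs_of_pos (mul_pos hh hDp)]
    have hs : Real.sqrt (D + h ^ 2) ≤ (3 + h) * (R - 1) := by
      apply Real.sqrt_le_iff.2
      constructor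
      · nlinarith
      · have : h ≤ h * (R - 1) := by nlinarith
        have h3 : R + 1 + h ≤ (3 + h) * (R - 1) := by nlinarith
        have h4 : (R + 1 + h) ^ 2 ≤ ((3 + h) * (R - 1)) ^ 2 := by
          apply pow_le_pow_left₀ _ h3
          linarith
        nlinarith
    have ha : |1 + R * Real.sin u| ≤ 3 * (R - 1) := by
      rw [abs_le]
      constructor <;> nlinarith
    rw [div_le_div_iff₀ (mul_pos hh hDp) hh]
    have hm : Real.sqrt (D + h ^ 2) * |1 + R * Real.sin u| ≤
        ((3 + h) * (R - 1)) * (3 * (R - 1)) :=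
      mul_le_mul hs ha (abs_nonneg _) (by nlinarith)
    have hm2 : ((3 + h) * (R - 1)) * (3 * (R - 1)) ≤ (3 + h) * 3 * D := by
      have : (3 + h) * 3 * (R - 1) ^ 2 ≤ (3 + h) * 3 * D :=
        mul_le_mul_of_nonneg_left hl (by positivity)
      linarith
    calc _ ≤ ((3 + h) * 3 * D) * h := mul_le_mul_of_nonneg_right (hm.trans hm2) hh.le
      _ = _ := by ring
  · simp
  · refine Eventually.of_forall fun u _ => ?_
    set s := Real.sin u with hsdef
    have hc : ContinuousAt (fun x : ℝ => Real.sqrt (1 + x ^ 2 + 2 * x * s + h ^ 2 * x ^ 2) *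
        (x + s) / (h * (1 + x ^ 2 + 2 * x * s))) 0 := by
      apply ContinuousAt.div
      · fun_prop
      · fun_prop
      · simp [hh.ne']
    have ht := hc.tendsto.comp (tendsto_inv_atTop_zero (𝕜 := ℝ))
    have h0 : Real.sqrt (1 + (0:ℝ) ^ 2 + 2 * 0 * s + h ^ 2 * 0 ^ 2) *
        (0 + s) / (h * (1 + 0 ^ 2 + 2 * 0 * s)) = s / h := by simp
    rw [h0] at ht
    refine ht.congr' ?_
    filter_upwards [eventually_ge_atTop (2 : ℝ)] with R hR
    have hR0 : 0 < R := by linarith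
    have hDp : 0 < R ^ 2 + 1 + 2 * R * s := by
      have := (hD R hR u).1
      nlinarith
    have e1 : 1 + R⁻¹ ^ 2 + 2 * R⁻¹ * s + h ^ 2 * R⁻¹ ^ 2 =
        (R ^ 2 + 1 + 2 * R * s + h ^ 2) / R ^ 2 := by field_simp
    have e2 : 1 + R⁻¹ ^ 2 + 2 * R⁻¹ * s = (R ^ 2 + 1 + 2 * R * s) / R ^ 2 := by field_simp
    have e3 : R⁻¹ + s = (1 + R * s) / R := by field_simp
    simp only [Function.comp]
    rw [e1, e2, e3, Real.sqrt_div' _ (by positivity), Real.sqrt_sq hR0.le]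
    have hne := hDp.ne'
    generalize Real.sqrt (R ^ 2 + 1 + 2 * R * s + h ^ 2) = q
    generalize R ^ 2 + 1 + 2 * R * s = D at hne
    field_simp
end
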